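/- arXiv:1605.07884 — 6 statements merged into one kernel-verified Lean document; each statement's English description precedes it below -/
import Mathlib

section
/- Let Ξ be a nonempty subset of L⁰(ℝ^d,F) that is H-decomposable and closed in probability. Then there exists an H-measurable random closed set X in ℝ^d such that Ξ ∩ L⁰(ℝ^d,H) = L⁰(X,H). Conversely, for any F-measurable random closed set X, the family L⁰(X,F) is F-decomposable and closed in probability. -/
open MeasureTheory Filter Set Topology
open scoped Pointwise ENNReal

noncomputable section

/-- Shorthand for the Euclidean space `ℝ^d`. -/
abbrev Ed (d : ℕ) := EuclideanSpace ℝ (Fin d)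

/-- A set-valued map `Γ : Ω → Set (ℝ^d)` is a random set w.r.t. the σ-algebra `m`
if its graph belongs to the product σ-algebra `m ⊗ B(ℝ^d)`. -/
def GraphMeasurable {Ω : Type*} {d : ℕ} (m : MeasurableSpace Ω)
    (Γ : Ω → Set (Ed d)) : Prop :=
  MeasurableSet[m.prod (inferInstance : MeasurableSpace (Ed d))]
    {p : Ω × Ed d | p.2 ∈ Γ p.1}

/-- The family `L⁰(Γ, m)` of `m`-measurable selections of a set-valued map `Γ`
(measurable maps that belong to `Γ` almost surely). -/
def Sel {Ω : Type*} {d : ℕ} {F : MeasurableSpace Ω} (μ : Measure Ω)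
    (m : MeasurableSpace Ω) (Γ : Ω → Set (Ed d)) : Set (Ω → Ed d) :=
  {ξ | Measurable[m] ξ ∧ ∀ᵐ ω ∂μ, ξ ω ∈ Γ ω}

/-! Some countable subfamily `D` of the `H`-measurable members of `Ξ` is almost surely pointwise
dense in each of them: for every set `B` of a countable base, the events `{ξ ∈ B}` have an essential
union that is attained by countably many `ξ`. Let `X ω` be the closure of `{ζ ω | ζ ∈ D}`. For a
selection `ξ` of `X`, the point of `ζ₀ ω, …, ζ_N ω` nearest to `ξ ω`, where `D = {ζ₀, ζ₁, …}`, is a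
gluing of members of `D` along `H`-measurable sets, hence in `Ξ`, and it tends to `ξ ω` as `N → ∞`.
For the converse, convergence in probability gives almost sure convergence along a subsequence. -/

section DecomposableFamilies

variable {Ω E : Type*}

section PointwiseClosure

variable {m : MeasurableSpace Ω} [MeasurableSpace E]

theorem exists_countable_subset_forall_ae_mem_closure [TopologicalSpace E]
    [SecondCountableTopology E] [OpensMeasurableSpace E] (μ : Measure Ω) [SFinite μ]
    {M : Set (Ω → E)} (hM : ∀ ξ ∈ M, Measurable ξ) :
    ∃ D ⊆ M, D.Countable ∧ ∀ ξ ∈ M, ∀ᵐ ω ∂μ, ξ ω ∈ closure ((· ω) '' D) := by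
  have hbasis := TopologicalSpace.isBasis_countableBasis E
  have hcount := TopologicalSpace.countable_countableBasis E
  have hhit : ∀ B ∈ TopologicalSpace.countableBasis E, ∃ D ⊆ M, D.Countable ∧
      ∀ ξ ∈ M, ∀ᵐ ω ∂μ, ξ ω ∈ B → ∃ ζ ∈ D, ζ ω ∈ B := by
    intro B hB
    obtain ⟨C, hCM, hC, hunion⟩ := Measure.exists_ae_subset_biUnion_countable μ
      (C := (· ⁻¹' B) '' M) <|
        forall_mem_image.2 fun ξ hξ => hM ξ hξ (hbasis.isOpen hB).measurableSet
    obtain ⟨D, hDM, hinj, rfl⟩ := SurjOn.exists_subset_injOn_image_eq hCM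
    refine ⟨D, hDM, countable_of_injective_of_countable_image hinj hC, fun ξ hξ => ?_⟩
    filter_upwards [hunion _ (mem_image_of_mem _ hξ)] with ω hω hξB
    obtain ⟨_, ⟨ζ, hζ, rfl⟩, hζB⟩ := hω hξB
    exact ⟨ζ, hζ, hζB⟩
  choose! D hDM hD hDhit using hhit
  refine ⟨⋃ B ∈ TopologicalSpace.countableBasis E, D B, iUnion₂_subset hDM, hcount.biUnion hD,
    fun ξ hξ => ?_⟩
  filter_upwards [(ae_ball_iff hcount).2 fun B hB => hDhit B hB ξ hξ] with ω hω
  refine hbasis.mem_closure_iff.2 fun B hB hξB => ?_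
  obtain ⟨ζ, hζ, hζB⟩ := hω B hB hξB
  exact ⟨ζ ω, hζB, mem_image_of_mem _ (mem_biUnion hB hζ)⟩

theorem measurableSet_setOf_snd_mem_closure_image [PseudoEMetricSpace E]
    [SecondCountableTopology E] [OpensMeasurableSpace E] {D : Set (Ω → E)} (hD : D.Countable)
    (hmeas : ∀ ζ ∈ D, Measurable ζ) :
    MeasurableSet {p : Ω × E | p.2 ∈ closure ((· p.1) '' D)} := by
  simp only [Metric.mem_closure_iff_infEDist_zero, Metric.infEDist, iInf_image]
  have hdist : Measurable fun p : Ω × E => ⨅ ζ ∈ D, edist p.2 (ζ p.1) :=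
    .biInf D hD fun ζ hζ => measurable_snd.edist ((hmeas ζ hζ).comp measurable_fst)
  exact hdist (measurableSet_singleton 0)

end PointwiseClosure

open Classical in
/-- `m`-decomposability of a family `Ξ` of maps: stability under gluing two members along an
`m`-measurable set. For vector-valued maps, `A.piecewise ξ η` is `ξ 1_A + η 1_{Ω ∖ A}`; the present
form makes sense without an addition on `E`. -/
def IsDecomposable (m : MeasurableSpace Ω) (Ξ : Set (Ω → E)) : Prop :=
  ∀ ξ ∈ Ξ, ∀ η ∈ Ξ, ∀ A : Set Ω, MeasurableSet[m] A → A.piecewise ξ η ∈ Ξ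

theorem isDecomposable_setOf_measurable [MeasurableSpace E] (m : MeasurableSpace Ω) :
    IsDecomposable m {ξ : Ω → E | Measurable[m] ξ} :=
  fun _ hξ _ hη _ hA => Measurable.piecewise hA hξ hη

namespace IsDecomposable

theorem inter {m : MeasurableSpace Ω} {Ξ Θ : Set (Ω → E)} (hΞ : IsDecomposable m Ξ)
    (hΘ : IsDecomposable m Θ) : IsDecomposable m (Ξ ∩ Θ) :=
  fun ξ hξ η hη A hA => ⟨hΞ ξ hξ.1 η hη.1 A hA, hΘ ξ hξ.2 η hη.2 A hA⟩

theorem nearestPt_mem [PseudoEMetricSpace E] [SecondCountableTopology E] [MeasurableSpace E]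
    [OpensMeasurableSpace E] {m : MeasurableSpace Ω} {Ξ : Set (Ω → E)} (hΞ : IsDecomposable m Ξ)
    {ζ : ℕ → Ω → E} (hζΞ : ∀ n, ζ n ∈ Ξ) (hζ : ∀ n, Measurable[m] (ζ n)) {ξ : Ω → E}
    (hξ : Measurable[m] ξ) (N : ℕ) :
    (fun ω => SimpleFunc.nearestPt (ζ · ω) N (ξ ω)) ∈ Ξ := by
  induction N with
  | zero => exact hζΞ 0
  | succ N ih =>
    let A : Set Ω := {ω | ∀ k ≤ N, edist (ζ (N + 1) ω) (ξ ω) < edist (ζ k ω) (ξ ω)}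
    have hA : MeasurableSet[m] A := by
      simp only [A, ofPred_forall]
      exact .iInter fun k => .iInter fun _ =>
        measurableSet_lt ((hζ _).edist hξ) ((hζ k).edist hξ)
    convert hΞ _ (hζΞ (N + 1)) _ ih A hA using 1
    ext1 ω
    simp only [SimpleFunc.nearestPt, SimpleFunc.map_apply, SimpleFunc.nearestPtInd_succ,
      apply_ite (ζ · ω), piecewise]
    congr 1

end IsDecomposable

/-- Closedness in probability (in measure) of a family `Ξ` of maps. Members of `Ξ` are functions
rather than classes modulo `μ`, so a limit is only required to agree almost everywhere with some
member. -/
def IsClosedInMeasure [PseudoEMetricSpace E] [MeasurableSpace E] {F : MeasurableSpace Ω}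
    (μ : Measure Ω) (Ξ : Set (Ω → E)) : Prop :=
  ∀ (f : ℕ → Ω → E) (g : Ω → E), (∀ n, f n ∈ Ξ) → Measurable[F] g →
    TendstoInMeasure μ f atTop g → ∃ g' ∈ Ξ, g' =ᵐ[μ] g

/-- The family `L⁰(Γ, m)` of `m`-measurable almost sure selections of `Γ`, for a set-valued map into
an arbitrary measurable space. -/
def aeSelections [MeasurableSpace E] {_ : MeasurableSpace Ω} (μ : Measure Ω)
    (m : MeasurableSpace Ω) (Γ : Ω → Set E) : Set (Ω → E) :=
  {ξ | Measurable[m] ξ ∧ ∀ᵐ ω ∂μ, ξ ω ∈ Γ ω}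

theorem isDecomposable_aeSelections [MeasurableSpace E] {_ : MeasurableSpace Ω} (μ : Measure Ω)
    (m : MeasurableSpace Ω) (Γ : Ω → Set E) : IsDecomposable m (aeSelections μ m Γ) := by
  classical
  refine (isDecomposable_setOf_measurable m).inter fun ξ hξ η hη A _ => ?_
  filter_upwards [hξ, hη] with ω hξω hηω
  by_cases hω : ω ∈ A <;> simpa [hω]

section Metric

variable [PseudoEMetricSpace E]

theorem ae_mem_of_tendstoInMeasure {ι : Type*} {F : MeasurableSpace Ω} {μ : Measure Ω}
    {l : Filter ι} [l.NeBot] [l.IsCountablyGenerated] {Γ : Ω → Set E} (hΓ : ∀ᵐ ω ∂μ, IsClosed (Γ ω))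
    {f : ι → Ω → E} {g : Ω → E} (hf : ∀ i, ∀ᵐ ω ∂μ, f i ω ∈ Γ ω)
    (hfg : TendstoInMeasure μ f l g) : ∀ᵐ ω ∂μ, g ω ∈ Γ ω := by
  obtain ⟨u, -, hu⟩ := hfg.exists_seq_tendsto_ae'
  filter_upwards [hΓ, ae_all_iff.2 fun n => hf (u n), hu] with ω hclosed hmem hlim
  exact hclosed.mem_of_tendsto hlim (.of_forall hmem)

variable [SecondCountableTopology E] [MeasurableSpace E] [OpensMeasurableSpace E]
  {H F : MeasurableSpace Ω} {μ : Measure Ω} [IsFiniteMeasure μ] {Ξ : Set (Ω → E)}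

theorem IsDecomposable.exists_ae_eq_of_ae_mem_closure_range (hHF : H ≤ F)
    (hdec : IsDecomposable H Ξ) (hclosed : IsClosedInMeasure μ Ξ) {ζ : ℕ → Ω → E}
    (hζΞ : ∀ n, ζ n ∈ Ξ) (hζ : ∀ n, Measurable[H] (ζ n)) {ξ : Ω → E} (hξ : Measurable[H] ξ)
    (hmem : ∀ᵐ ω ∂μ, ξ ω ∈ closure (range (ζ · ω))) : ∃ ξ' ∈ Ξ, ξ' =ᵐ[μ] ξ := by
  have hnear := (hdec.inter (isDecomposable_setOf_measurable H)).nearestPt_mem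
    (fun n => ⟨hζΞ n, hζ n⟩) hζ hξ
  refine hclosed _ ξ (fun N => (hnear N).1) (hξ.mono hHF le_rfl) ?_
  exact tendstoInMeasure_of_tendsto_ae
    (fun N => ((hnear N).2.mono hHF le_rfl).aestronglyMeasurable)
    (hmem.mono fun ω hω => SimpleFunc.tendsto_nearestPt hω)

theorem IsDecomposable.exists_isClosed_inter_measurable_eq_aeSelections (hHF : H ≤ F)
    (hne : Ξ.Nonempty) (hdec : IsDecomposable H Ξ) (hclosed : IsClosedInMeasure μ Ξ) :
    ∃ X : Ω → Set E, MeasurableSet[H.prod ‹MeasurableSpace E›] {p : Ω × E | p.2 ∈ X p.1} ∧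
      (∀ ω, IsClosed (X ω)) ∧ (∀ ξ ∈ Ξ, Measurable[H] ξ → ξ ∈ aeSelections μ H X) ∧
      ∀ ξ ∈ aeSelections μ H X, ∃ ξ' ∈ Ξ, ξ' =ᵐ[μ] ξ := by
  obtain ⟨D, hD, hDc, hdense⟩ := exists_countable_subset_forall_ae_mem_closure μ
    (M := {ξ ∈ Ξ | Measurable[H] ξ}) fun ξ hξ => hξ.2.mono hHF le_rfl
  refine ⟨fun ω => closure ((· ω) '' D),
    measurableSet_setOf_snd_mem_closure_image hDc fun ζ hζ => (hD hζ).2,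
    fun ω => isClosed_closure, fun ξ hξ hξH => ⟨hξH, hdense ξ ⟨hξ, hξH⟩⟩, fun ξ ⟨hξH, hξX⟩ => ?_⟩
  rcases D.eq_empty_or_nonempty with rfl | hDne
  · obtain ⟨η, hη⟩ := hne
    exact ⟨η, hη, hξX.mono fun ω hω => by simp at hω⟩
  · obtain ⟨ζ, rfl⟩ := hDc.exists_eq_range hDne
    simp only [← range_comp] at hξX
    exact hdec.exists_ae_eq_of_ae_mem_closure_range hHF hclosed (fun n => (hD ⟨n, rfl⟩).1)
      (fun n => (hD ⟨n, rfl⟩).2) hξH hξX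

end Metric

theorem stmt_0_general {F : MeasurableSpace Ω} [PseudoEMetricSpace E] [SecondCountableTopology E]
    [MeasurableSpace E] [OpensMeasurableSpace E] (μ : Measure Ω) [IsFiniteMeasure μ]
    (H : MeasurableSpace Ω) (hHF : H ≤ F) :
    (∀ Ξ : Set (Ω → E), Ξ.Nonempty → IsDecomposable H Ξ → IsClosedInMeasure μ Ξ →
      ∃ X : Ω → Set E, MeasurableSet[H.prod ‹MeasurableSpace E›] {p : Ω × E | p.2 ∈ X p.1} ∧
        (∀ ω, IsClosed (X ω)) ∧ (∀ ξ ∈ Ξ, Measurable[H] ξ → ξ ∈ aeSelections μ H X) ∧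
        ∀ ξ ∈ aeSelections μ H X, ∃ ξ' ∈ Ξ, ξ' =ᵐ[μ] ξ) ∧
    ∀ X : Ω → Set E, (∀ᵐ ω ∂μ, IsClosed (X ω)) →
      IsDecomposable F (aeSelections μ F X) ∧
      ∀ (f : ℕ → Ω → E) (g : Ω → E), (∀ n, f n ∈ aeSelections μ F X) → Measurable[F] g →
        TendstoInMeasure μ f atTop g → g ∈ aeSelections μ F X :=
  ⟨fun _ hne hdec hclosed =>
    hdec.exists_isClosed_inter_measurable_eq_aeSelections hHF hne hclosed,
    fun X hX => ⟨isDecomposable_aeSelections μ F X, fun _ _ hf hg hfg =>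
      ⟨hg, ae_mem_of_tendstoInMeasure hX (fun n => (hf n).2) hfg⟩⟩⟩

end DecomposableFamilies

/-- Theorem (representation of decomposable, closed-in-probability families):
a nonempty `H`-decomposable subset of `L⁰(ℝ^d, F)` that is closed in probability satisfies
`Ξ ∩ L⁰(ℝ^d,H) = L⁰(X,H)` for some `H`-measurable random closed set `X`; conversely, the
family of selections of any `F`-measurable random closed set is `F`-decomposable and closed
in probability. -/
theorem stmt_0 {Ω : Type*} {d : ℕ} [F : MeasurableSpace Ω]
    (μ : Measure Ω) [IsProbabilityMeasure μ] [μ.IsComplete]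
    (H : MeasurableSpace Ω) (hHF : H ≤ F) :
    (∀ Ξ : Set (Ω → Ed d), Ξ.Nonempty →
      (∀ ξ ∈ Ξ, Measurable[F] ξ) →
      -- H-decomposability: ξ 1_A + η 1_{Ω ∖ A} ∈ Ξ
      (∀ ξ ∈ Ξ, ∀ η ∈ Ξ, ∀ A : Set Ω, MeasurableSet[H] A →
        A.indicator ξ + Aᶜ.indicator η ∈ Ξ) →
      -- closedness in probability (up to a.s. equality)
      (∀ (f : ℕ → Ω → Ed d) (g : Ω → Ed d), (∀ n, f n ∈ Ξ) → Measurable[F] g →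
        TendstoInMeasure μ f atTop g → ∃ g' ∈ Ξ, g' =ᵐ[μ] g) →
      -- conclusion: there is an H-measurable random closed set X with
      -- Ξ ∩ L⁰(ℝ^d,H) = L⁰(X,H)
      ∃ X : Ω → Set (Ed d), GraphMeasurable H X ∧ (∀ᵐ ω ∂μ, IsClosed (X ω)) ∧
        (∀ ξ ∈ Ξ, Measurable[H] ξ → ξ ∈ Sel μ H X) ∧
        (∀ ξ ∈ Sel μ H X, ∃ ξ' ∈ Ξ, ξ' =ᵐ[μ] ξ))
    ∧
    (∀ X : Ω → Set (Ed d), GraphMeasurable F X → (∀ᵐ ω ∂μ, IsClosed (X ω)) →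
      -- L⁰(X,F) is F-decomposable
      (∀ ξ ∈ Sel μ F X, ∀ η ∈ Sel μ F X, ∀ A : Set Ω, MeasurableSet[F] A →
        A.indicator ξ + Aᶜ.indicator η ∈ Sel μ F X) ∧
      -- and closed in probability
      (∀ (f : ℕ → Ω → Ed d) (g : Ω → Ed d), (∀ n, f n ∈ Sel μ F X) → Measurable[F] g →
        TendstoInMeasure μ f atTop g → g ∈ Sel μ F X)) := by
  classical
  simp only [indicator_add_compl_eq_piecewise]
  obtain ⟨hrepr, hconv⟩ := stmt_0_general (E := Ed d) μ H hHF
  exact ⟨fun Ξ hne _ hdec hclosed => (hrepr Ξ hne hdec hclosed).imp fun _ hX =>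
    ⟨hX.1, .of_forall hX.2.1, hX.2.2⟩, fun X _ => hconv X⟩
end
end

section
/- Let ξ_n : Ω → ℝ^d, n ≥ 1, be measurable maps and set X(ω) = cl{ξ_n(ω) : n ≥ 1}, which is a random closed set. Let ξ be a measurable map with ξ(ω) ∈ X(ω) for almost all ω. Then for every ε > 0 there exists a finite F-measurable partition A_1,…,A_n of Ω such that E[ min(‖ξ − Σ_{i=1}^n 1_{A_i} ξ_i‖, 1) ] ≤ ε. -/
open MeasureTheory Filter Set Topology
open scoped Pointwise ENNReal

noncomputable section

/-! Among the first `n + 1` functions, choose measurably an index `N n ω` that minimises the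
distance to `g ω`. These distances tend to `0` wherever `g ω` lies in the closure of the `f k ω`,
so by dominated convergence the truncated distances tend to `0` in mean; the level sets of a single
`N n` then form the desired partition. -/

theorem exists_measurable_forall_mem {Ω ι : Type*} [MeasurableSpace Ω] [Countable ι] [Nonempty ι]
    [MeasurableSpace ι] {s : ι → Set Ω} (hs : ∀ i, MeasurableSet (s i))
    (hcover : ∀ ω, ∃ i, ω ∈ s i) :
    ∃ N : Ω → ι, Measurable N ∧ ∀ ω, ω ∈ s (N ω) := by
  classical
  obtain ⟨e, he⟩ := exists_surjective_nat ι
  have hcover_nat : ∀ ω, ∃ k, ω ∈ s (e k) := fun ω => he.exists.mp (hcover ω)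
  exact ⟨fun ω => e (Nat.find (hcover_nat ω)),
    measurable_from_nat.comp (measurable_find hcover_nat fun k => hs (e k)),
    fun ω => Nat.find_spec (hcover_nat ω)⟩

theorem exists_measurable_argmin {Ω ι α : Type*} [MeasurableSpace Ω] [Finite ι] [Nonempty ι]
    [MeasurableSpace ι] [LinearOrder α] [TopologicalSpace α] [OrderClosedTopology α]
    [SecondCountableTopology α] [MeasurableSpace α] [OpensMeasurableSpace α]
    {f : ι → Ω → α} (hf : ∀ i, Measurable (f i)) :
    ∃ N : Ω → ι, Measurable N ∧ ∀ ω i, f (N ω) ω ≤ f i ω := by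
  have hmeas : ∀ i, MeasurableSet {ω | ∀ j, f i ω ≤ f j ω} := fun i => by
    simp only [ofPred_forall]
    exact MeasurableSet.iInter fun j => measurableSet_le (hf i) (hf j)
  exact exists_measurable_forall_mem hmeas fun ω => Finite.exists_min fun i => f i ω

theorem sum_indicator_preimage_singleton {Ω ι E : Type*} [Fintype ι] [AddCommMonoid E]
    (N : Ω → ι) (f : ι → Ω → E) (ω : Ω) :
    ∑ i, (N ⁻¹' {i}).indicator (f i) ω = f (N ω) ω := by
  classical
  simp [indicator_apply]

theorem tendsto_of_mem_closure_range_of_forall_dist_le {E : Type*} [PseudoMetricSpace E]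
    {u v : ℕ → E} {x : E} (hx : x ∈ closure (range u))
    (hv : ∀ n, ∀ k ≤ n, dist (v n) x ≤ dist (u k) x) :
    Tendsto v atTop (𝓝 x) := by
  refine Metric.tendsto_atTop.mpr fun δ hδ => ?_
  obtain ⟨k, hk⟩ := Metric.mem_closure_range_iff.mp hx δ hδ
  exact ⟨k, fun n hkn => (hv n k hkn).trans_lt (by rwa [dist_comm])⟩

theorem tendsto_integral_min_dist_one {Ω E ι : Type*} [MeasurableSpace Ω] [PseudoMetricSpace E]
    {μ : Measure Ω} [IsFiniteMeasure μ] {l : Filter ι} [l.IsCountablyGenerated]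
    {f : ι → Ω → E} {g : Ω → E} (hf : ∀ i, AEStronglyMeasurable (f i) μ)
    (hg : AEStronglyMeasurable g μ)
    (hlim : ∀ᵐ ω ∂μ, Tendsto (fun i => f i ω) l (𝓝 (g ω))) :
    Tendsto (fun i => ∫ ω, min (dist (f i ω) (g ω)) 1 ∂μ) l (𝓝 0) := by
  rw [← integral_zero Ω ℝ (μ := μ)]
  refine tendsto_integral_filter_of_dominated_convergence (fun _ => 1)
    (.of_forall fun i => ((hf i).dist hg).inf aestronglyMeasurable_const)
    (.of_forall fun i => ae_of_all μ fun ω => ?bound) (integrable_const 1) ?limit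
  case bound =>
    rw [Real.norm_of_nonneg (le_min dist_nonneg zero_le_one)]
    exact min_le_right _ _
  case limit =>
    filter_upwards [hlim] with ω hω
    simpa using (tendsto_iff_dist_tendsto_zero.mp hω).min (tendsto_const_nhds (x := (1 : ℝ)))

theorem exists_measurable_index_tendsto {Ω E : Type*} [MeasurableSpace Ω] [PseudoMetricSpace E]
    {f : ℕ → Ω → E} {g : Ω → E} (hf : ∀ k, StronglyMeasurable (f k))
    (hg : StronglyMeasurable g) :
    ∃ N : (n : ℕ) → Ω → Fin (n + 1), (∀ n, Measurable (N n)) ∧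
      ∀ ω, g ω ∈ closure (range fun k => f k ω) →
        Tendsto (fun n => f (N n ω) ω) atTop (𝓝 (g ω)) := by
  choose N hN hmin using fun n : ℕ =>
    exists_measurable_argmin fun i : Fin (n + 1) => ((hf i).dist hg).measurable
  exact ⟨N, hN, fun ω hω => tendsto_of_mem_closure_range_of_forall_dist_le hω
    fun n k hkn => hmin n ω ⟨k, Nat.lt_succ_of_le hkn⟩⟩

theorem stmt_1_general {Ω E : Type*} [MeasurableSpace Ω] [SeminormedAddCommGroup E]
    {μ : Measure Ω} [IsFiniteMeasure μ] {f : ℕ → Ω → E} {g : Ω → E}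
    (hf : ∀ k, StronglyMeasurable (f k)) (hg : StronglyMeasurable g)
    (hmem : ∀ᵐ ω ∂μ, g ω ∈ closure (range fun k => f k ω)) {ε : ℝ} (hε : 0 < ε) :
    ∃ (n : ℕ) (A : Fin n → Set Ω),
      (∀ i, MeasurableSet (A i)) ∧
      (Pairwise fun i j => Disjoint (A i) (A j)) ∧
      (⋃ i, A i) = univ ∧
      ∫ ω, min ‖g ω - ∑ i : Fin n, (A i).indicator (f i) ω‖ 1 ∂μ ≤ ε := by
  obtain ⟨N, hN, hlim⟩ := exists_measurable_index_tendsto hf hg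
  have hlevel : ∀ n i, MeasurableSet (N n ⁻¹' {i}) := fun n i => hN n (measurableSet_singleton i)
  have hglue : ∀ n ω, ∑ i, (N n ⁻¹' {i}).indicator (f i) ω = f (N n ω) ω := fun n =>
    sum_indicator_preimage_singleton (N n) fun i => f i
  have hglue_meas : ∀ n, StronglyMeasurable fun ω => f (N n ω) ω := fun n => by
    simp only [← hglue]
    exact Finset.stronglyMeasurable_fun_sum _ fun i _ => (hf i).indicator (hlevel n i)
  have hmean : Tendsto (fun n => ∫ ω, min (dist (f (N n ω) ω) (g ω)) 1 ∂μ) atTop (𝓝 0) :=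
    tendsto_integral_min_dist_one (fun n => (hglue_meas n).aestronglyMeasurable)
      hg.aestronglyMeasurable (hmem.mono hlim)
  obtain ⟨n, hn⟩ := (hmean.eventually_le_const hε).exists
  refine ⟨n + 1, fun i => N n ⁻¹' {i}, hlevel n, pairwise_disjoint_fiber (N n), ?_, ?_⟩
  · rw [← preimage_iUnion, iUnion_of_singleton, preimage_univ]
  · simpa only [hglue, ← dist_eq_norm, dist_comm (g _)] using hn

/-- Lemma (approximation by a finite measurable gluing of a countable family):
if `X(ω) = cl{ξ_n(ω) : n ≥ 1}` and `ξ` is a measurable a.s. selection of `X`, then for every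
`ε > 0` there is a finite measurable partition `A_1, …, A_n` of `Ω` with
`E[‖ξ - Σ_i 1_{A_i} ξ_i‖ ∧ 1] ≤ ε`. -/
theorem stmt_1 {Ω : Type*} {d : ℕ} [F : MeasurableSpace Ω]
    (μ : Measure Ω) [IsProbabilityMeasure μ] [μ.IsComplete]
    (ξseq : ℕ → Ω → Ed d) (hseq : ∀ n, Measurable (ξseq n))
    (ξ : Ω → Ed d) (hξ : Measurable ξ)
    (hmem : ∀ᵐ ω ∂μ, ξ ω ∈ closure (Set.range fun n => ξseq n ω))
    (ε : ℝ) (hε : 0 < ε) :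
    ∃ (n : ℕ) (A : Fin n → Set Ω),
      (∀ i, MeasurableSet (A i)) ∧
      (Pairwise fun i j => Disjoint (A i) (A j)) ∧
      (⋃ i, A i) = Set.univ ∧
      ∫ ω, min ‖ξ ω - ∑ i : Fin n, (A i).indicator (ξseq i.1) ω‖ 1 ∂μ ≤ ε :=
  stmt_1_general (fun n => (hseq n).stronglyMeasurable) hξ.stronglyMeasurable hmem hε
end
end

section
/- Let Ξ ⊆ L⁰(ℝ^d,F) be infinitely F-decomposable, and let Γ be an F-measurable random set such that Γ(ω) is open and nonempty for almost all ω. Then L⁰(Γ,F) + Ξ = L⁰(Γ,F) + cl₀Ξ, where the sums are Minkowski sums of subsets of L⁰(ℝ^d,F) and cl₀Ξ is the closure of Ξ with respect to convergence in probability. -/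
open MeasureTheory Filter Set Topology
open scoped Pointwise ENNReal

noncomputable section

/-- The closure of `Ξ` in probability. -/
def clProb {Ω : Type*} {d : ℕ} {F : MeasurableSpace Ω} (μ : Measure Ω)
    (Ξ : Set (Ω → Ed d)) : Set (Ω → Ed d) :=
  {g | Measurable g ∧ ∃ f : ℕ → Ω → Ed d, (∀ n, f n ∈ Ξ) ∧ TendstoInMeasure μ f atTop g}

/-!
Let `γ` be a selection of `Γ` and let `ξ` be a limit in probability of `fₙ ∈ Ξ`; along a
subsequence the convergence is almost sure. Since `Γ` is open, almost every `ω` has an `n` with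
`γ ω + ξ ω - fₙ ω ∈ Γ ω`. Choosing such an `n` measurably in `ω` glues the `fₙ` to some `ζ ∈ Ξ` for
which `γ + ξ - ζ` is a selection of `Γ`, and `γ + ξ = (γ + ξ - ζ) + ζ`.
-/

theorem exists_measurable_index_mem {Ω : Type*} [MeasurableSpace Ω] {A : ℕ → Set Ω}
    (hA : ∀ n, MeasurableSet (A n)) :
    ∃ k : Ω → ℕ, Measurable k ∧ ∀ ω ∈ ⋃ n, A n, ω ∈ A (k ω) := by
  obtain ⟨k, hk, hkA⟩ := exists_measurable_piecewise (disjointed A) (.disjointed hA)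
    (fun n _ => n) (fun _ => measurable_const)
    fun m n hmn ω hω => ((disjoint_disjointed A hmn).le_bot hω).elim
  refine ⟨k, hk, fun ω hω => ?_⟩
  rw [← iUnion_disjointed] at hω
  obtain ⟨n, hn⟩ := mem_iUnion.1 hω
  exact hkA n hn ▸ disjointed_subset A n hn

section Decomposable

variable {Ω E : Type*} [MeasurableSpace Ω]

/-- Infinite decomposability of a family of functions: it is closed under gluing countably many of
its members along a countable measurable partition, which is encoded by its index function `k`. -/
def IsCountablyDecomposable (Ξ : Set (Ω → E)) : Prop :=
  ∀ f : ℕ → Ω → E, (∀ n, f n ∈ Ξ) → ∀ k : Ω → ℕ, Measurable k → (fun ω => f (k ω) ω) ∈ Ξ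

variable [MeasurableSpace E]

/-- The measurable selections of a set-valued map `Γ`, with membership required almost everywhere:
the family `L⁰(Γ)`, for values in an arbitrary measurable space. -/
def measurableSelections (μ : Measure Ω) (Γ : Ω → Set E) : Set (Ω → E) :=
  {γ | Measurable γ ∧ ∀ᵐ ω ∂μ, γ ω ∈ Γ ω}

variable [PseudoEMetricSpace E] {μ : Measure Ω} {Ξ : Set (Ω → E)}

/-- The sequential closure `cl₀ Ξ` of a family of functions under convergence in measure, restricted
to measurable limits. -/
def closureInMeasure (μ : Measure Ω) (Ξ : Set (Ω → E)) : Set (Ω → E) :=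
  {g | Measurable g ∧ ∃ f : ℕ → Ω → E, (∀ n, f n ∈ Ξ) ∧ TendstoInMeasure μ f atTop g}

theorem subset_closureInMeasure (hΞ : ∀ ξ ∈ Ξ, Measurable ξ) : Ξ ⊆ closureInMeasure μ Ξ :=
  fun ξ hξ => ⟨hΞ ξ hξ, fun _ => ξ, fun _ => hξ, fun ε hε => by simp [hε.not_ge]⟩

theorem IsCountablyDecomposable.exists_ae_mem_of_mem_nhds (hΞ : IsCountablyDecomposable Ξ)
    {ξ : Ω → E} (hξ : ξ ∈ closureInMeasure μ Ξ) {U : Ω → Set E}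
    (hUmeas : ∀ ζ ∈ Ξ, MeasurableSet {ω | ζ ω ∈ U ω}) (hU : ∀ᵐ ω ∂μ, U ω ∈ 𝓝 (ξ ω)) :
    ∃ ζ ∈ Ξ, ∀ᵐ ω ∂μ, ζ ω ∈ U ω := by
  obtain ⟨-, f, hf, hfξ⟩ := hξ
  obtain ⟨ns, -, hns⟩ := hfξ.exists_seq_tendsto_ae
  obtain ⟨k, hk, hkU⟩ := exists_measurable_index_mem fun n => hUmeas (f (ns n)) (hf (ns n))
  refine ⟨_, hΞ (fun n => f (ns n)) (fun n => hf (ns n)) k hk, ?_⟩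
  filter_upwards [hns, hU] with ω hlim hUω
  obtain ⟨n, hn⟩ := (hlim.eventually_mem hUω).exists
  exact hkU ω (mem_iUnion.2 ⟨n, hn⟩)

variable [AddGroup E] [IsTopologicalAddGroup E] [MeasurableAdd₂ E] [MeasurableNeg E]
  {Γ : Ω → Set E}

theorem IsCountablyDecomposable.exists_sub_mem_measurableSelections
    (hΞ : IsCountablyDecomposable Ξ) (hΞmeas : ∀ ξ ∈ Ξ, Measurable ξ)
    (hΓ : MeasurableSet {p : Ω × E | p.2 ∈ Γ p.1}) (hΓopen : ∀ᵐ ω ∂μ, IsOpen (Γ ω))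
    {γ ξ : Ω → E} (hγ : γ ∈ measurableSelections μ Γ) (hξ : ξ ∈ closureInMeasure μ Ξ) :
    ∃ ζ ∈ Ξ, γ + ξ - ζ ∈ measurableSelections μ Γ := by
  have hmeas (ζ) (hζ : ζ ∈ Ξ) : Measurable (γ + ξ - ζ) := (hγ.1.add hξ.1).sub (hΞmeas ζ hζ)
  let U (ω : Ω) : Set E := {x | γ ω + ξ ω - x ∈ Γ ω}
  have hUmeas (ζ) (hζ : ζ ∈ Ξ) : MeasurableSet {ω | ζ ω ∈ U ω} :=
    measurable_id.prodMk (hmeas ζ hζ) hΓ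
  have hU : ∀ᵐ ω ∂μ, U ω ∈ 𝓝 (ξ ω) := by
    filter_upwards [hγ.2, hΓopen] with ω hγω hopen
    have hcont : Continuous fun x => γ ω + ξ ω - x := continuous_const.sub continuous_id
    exact (hopen.preimage hcont).mem_nhds (by simpa using hγω)
  obtain ⟨ζ, hζ, hζΓ⟩ := hΞ.exists_ae_mem_of_mem_nhds hξ hUmeas hU
  exact ⟨ζ, hζ, hmeas ζ hζ, hζΓ⟩

theorem stmt_2_general (hΞmeas : ∀ ξ ∈ Ξ, Measurable ξ) (hΞ : IsCountablyDecomposable Ξ)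
    (hΓ : MeasurableSet {p : Ω × E | p.2 ∈ Γ p.1}) (hΓopen : ∀ᵐ ω ∂μ, IsOpen (Γ ω)) :
    measurableSelections μ Γ + Ξ = measurableSelections μ Γ + closureInMeasure μ Ξ := by
  refine (add_subset_add_left (subset_closureInMeasure hΞmeas)).antisymm ?_
  rintro _ ⟨γ, hγ, ξ, hξ, rfl⟩
  obtain ⟨ζ, hζ, hsel⟩ := hΞ.exists_sub_mem_measurableSelections hΞmeas hΓ hΓopen hγ hξ
  exact ⟨γ + ξ - ζ, hsel, ζ, hζ, sub_add_cancel (γ + ξ) ζ⟩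

end Decomposable

/-- Proposition: if `Ξ` is infinitely `F`-decomposable and `Γ` is an a.s. open and nonempty
`F`-measurable random set, then `L⁰(Γ,F) + Ξ = L⁰(Γ,F) + cl₀ Ξ` (equality of subsets of
`L⁰`, i.e. up to a.s. equality).  A countable measurable partition `(A_n)` is encoded by its
measurable index function `k : Ω → ℕ` (so that `A_n = {k = n}` and
`Σ_n ξ_n 1_{A_n} = (ω ↦ ξ_{k(ω)}(ω))`). -/
theorem stmt_2 {Ω : Type*} {d : ℕ} [F : MeasurableSpace Ω]
    (μ : Measure Ω) [IsProbabilityMeasure μ] [μ.IsComplete]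
    (Ξ : Set (Ω → Ed d)) (hΞmeas : ∀ ξ ∈ Ξ, Measurable[F] ξ)
    -- infinite F-decomposability
    (hdec : ∀ ξs : ℕ → Ω → Ed d, (∀ n, ξs n ∈ Ξ) → ∀ k : Ω → ℕ, Measurable k →
      (fun ω => ξs (k ω) ω) ∈ Ξ)
    (Γ : Ω → Set (Ed d)) (hΓ : GraphMeasurable F Γ)
    (hΓopen : ∀ᵐ ω ∂μ, IsOpen (Γ ω) ∧ (Γ ω).Nonempty) :
    ∀ h : Ω → Ed d,
      (∃ γ ∈ Sel μ F Γ, ∃ ξ ∈ Ξ, h =ᵐ[μ] γ + ξ) ↔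
      (∃ γ ∈ Sel μ F Γ, ∃ ξ ∈ clProb μ Ξ, h =ᵐ[μ] γ + ξ) := by
  have hsum : Sel μ F Γ + Ξ = Sel μ F Γ + clProb μ Ξ :=
    stmt_2_general hΞmeas hdec hΓ (hΓopen.mono fun _ => And.left)
  intro h
  simpa only [← image2_add, exists_mem_image2] using Iff.of_eq (congrArg (∃ x ∈ ·, h =ᵐ[μ] x) hsum)
end
end

section
/- Let Γ be an F-measurable random set in ℝ^d. Then the pointwise closure ω ↦ cl Γ(ω) is a random closed set (its graph belongs to F ⊗ B(ℝ^d)), and the set of selections of cl Γ equals the closure in probability of the set of selections of Γ: L⁰(cl Γ, F) = cl₀ L⁰(Γ,F). -/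
open MeasureTheory Filter Set Topology
open scoped Pointwise ENNReal

noncomputable section

/-!
Both assertions reduce to measurable projection and measurable selection for sets
`G ∈ F ⊗ B(E)` over a complete measure space. Such a set depends on countably many events of `F`,
so it is the preimage of a Borel set `H ⊆ (ℕ → Bool) × E`. The projection of `H` is analytic, hence
universally measurable, because the outer measure of a continuous image of the Baire space is
exhausted by images of compact sets. A continuous parametrization of `H` turns selections of `G`
into selections of a closed-valued map, which come from the Kuratowski–Ryll-Nardzewski theorem.

The graph of `ω ↦ cl Γ(ω)` is then described by the events that `Γ(ω)` hits a basic open set, and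
every selection of the closure is a uniform limit of selections of `Γ`.
-/

section AnalyticSet

lemma exists_finset_forall_mem_of_isCompact {ι : Type*} {X : ι → Type*}
    [∀ i, TopologicalSpace (X i)] {S V : Set (∀ i, X i)} (hS : IsCompact S) (hV : IsOpen V)
    (hSV : S ⊆ V) : ∃ s : Finset ι, ∀ x ∈ S, ∀ y, (∀ i ∈ s, y i = x i) → y ∈ V := by
  classical
  refine hS.induction_on ⟨∅, by simp⟩ (fun A B hAB ⟨s, hs⟩ => ⟨s, fun x hx => hs x (hAB hx)⟩) ?_ ?_
  · rintro A B ⟨s, hs⟩ ⟨t, ht⟩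
    refine ⟨s ∪ t, ?_⟩
    rintro x (hx | hx) y hy
    · exact hs x hx y fun i hi => hy i (Finset.mem_union_left t hi)
    · exact ht x hx y fun i hi => hy i (Finset.mem_union_right s hi)
  · intro x hx
    obtain ⟨s, u, hu, hsV⟩ := isOpen_pi_iff.1 hV x (hSV hx)
    have hbox : (s : Set ι).pi u ∈ 𝓝 x :=
      set_pi_mem_nhds s.finite_toSet fun i hi => (hu i hi).1.mem_nhds (hu i hi).2
    exact ⟨_, mem_nhdsWithin_of_mem_nhds hbox, s, fun z hz y hy =>
      hsV fun i hi => by rw [hy i hi]; exact hz i hi⟩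

lemma exists_lt_measure_image_preimage_Iic_inter {α X : Type*} [MeasurableSpace X] (ν : Measure X)
    (g : α → X) (f : α → ℕ) {T : Set α} {c : ℝ≥0∞} (hc : c < ν (g '' T)) :
    ∃ m, c < ν (g '' (f ⁻¹' Iic m ∩ T)) := by
  have hmono : Monotone fun m => g '' (f ⁻¹' Iic m ∩ T) := fun a b hab =>
    image_mono (inter_subset_inter_left _ (preimage_mono (Iic_subset_Iic.2 hab)))
  have hunion : ⋃ m, g '' (f ⁻¹' Iic m ∩ T) = g '' T := by
    rw [← image_iUnion, ← iUnion_inter, ← preimage_iUnion, iUnion_Iic, preimage_univ, univ_inter]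
  rw [← hunion, hmono.measure_iUnion] at hc
  exact lt_iSup_iff.1 hc

lemma exists_forall_lt_measure_image_pi_Iic {X : Type*} [MeasurableSpace X] (ν : Measure X)
    (g : (ℕ → ℕ) → X) {c : ℝ≥0∞} (hc : c < ν (range g)) :
    ∃ N : ℕ → ℕ, ∀ k, c < ν (g '' (Iio k).pi fun i => Iic (N i)) := by
  choose m hm using fun (k : ℕ) (T : {T : Set (ℕ → ℕ) // c < ν (g '' T)}) =>
    exists_lt_measure_image_preimage_Iic_inter ν g (Function.eval k) T.2
  let T : ℕ → {T : Set (ℕ → ℕ) // c < ν (g '' T)} := fun k =>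
    Nat.rec ⟨univ, by rwa [image_univ]⟩ (fun k T => ⟨_, hm k T⟩) k
  have hT (k : ℕ) : (T k).1 = (Iio k).pi fun i => Iic (m i (T i)) := by
    induction k with
    | zero => simp [T]
    | succ k ih => rw [← Order.succ_eq_add_one, Order.Iio_succ_eq_insert, insert_pi, ← ih]; rfl
  exact ⟨fun i => m i (T i), fun k => hT k ▸ (T k).2⟩

lemma exists_isCompact_le_measure_image {X : Type*} [TopologicalSpace X] [MeasurableSpace X]
    (ν : Measure X) [ν.OuterRegular] {g : (ℕ → ℕ) → X} (hg : Continuous g) {c : ℝ≥0∞}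
    (hc : c < ν (range g)) : ∃ K, IsCompact K ∧ c ≤ ν (g '' K) := by
  obtain ⟨N, hN⟩ := exists_forall_lt_measure_image_pi_Iic ν g hc
  have hK : IsCompact (univ.pi fun i => Iic (N i)) :=
    isCompact_univ_pi fun i => (finite_Iic (N i)).isCompact
  refine ⟨_, hK, ?_⟩
  rw [measure_eq_iInf_isOpen]
  refine le_iInf₂ fun U hU => le_iInf fun hUo => ?_
  obtain ⟨s, hs⟩ :=
    exists_finset_forall_mem_of_isCompact hK (hUo.preimage hg) (image_subset_iff.1 hU)
  obtain ⟨k, hk⟩ := s.bddAbove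
  -- Truncating a point `y` at `N` moves it into the compact set without changing `y i` for `i ∈ s`.
  have htrunc : ((Iio (k + 1)).pi fun i => Iic (N i)) ⊆ g ⁻¹' U := fun y hy =>
    hs (y ⊓ N) (fun i _ => (inf_le_right : y ⊓ N ≤ N) i) y fun i hi =>
      (inf_eq_left.2 (hy i (Nat.lt_succ_of_le (hk hi)))).symm
  exact (hN (k + 1)).le.trans (measure_mono (image_subset_iff.2 htrunc))

lemma exists_isCompact_subset_lt_measure_of_analyticSet {X : Type*} [TopologicalSpace X]
    [MeasurableSpace X] (ν : Measure X) [ν.OuterRegular] {S : Set X} (hS : AnalyticSet S)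
    {c : ℝ≥0∞} (hc : c < ν S) : ∃ K ⊆ S, IsCompact K ∧ c < ν K := by
  obtain ⟨c', hcc', hc'⟩ := exists_between hc
  rw [AnalyticSet] at hS
  obtain rfl | ⟨g, hg, rfl⟩ := hS
  · simp at hc
  · obtain ⟨K, hK, hcK⟩ := exists_isCompact_le_measure_image ν hg hc'
    exact ⟨g '' K, image_subset_range g K, hK.image hg, hcc'.trans_le hcK⟩

lemma nullMeasurableSet_of_forall_lt_exists_subset {X : Type*} [MeasurableSpace X]
    {ν : Measure X} [IsFiniteMeasure ν] {S : Set X}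
    (h : ∀ c < ν S, ∃ A ⊆ S, MeasurableSet A ∧ c < ν A) : NullMeasurableSet S ν := by
  obtain h0 | h0 := eq_or_ne (ν S) 0
  · exact .of_null h0
  obtain ⟨c, -, hcS, hc⟩ := exists_seq_strictMono_tendsto' (pos_iff_ne_zero.2 h0)
  choose A hAS hA hcA using fun n => h (c n) (hcS n).2
  have hAm : NullMeasurableSet (⋃ n, A n) ν := (MeasurableSet.iUnion hA).nullMeasurableSet
  have hle : ν S ≤ ν (⋃ n, A n) :=
    le_of_tendsto' hc fun n => (hcA n).le.trans (measure_mono (subset_iUnion A n))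
  exact hAm.congr (ae_eq_of_subset_of_measure_ge (iUnion_subset hAS) hle hAm (measure_ne_top _ _))

lemma nullMeasurableSet_of_analyticSet {X : Type*} [TopologicalSpace X]
    [TopologicalSpace.MetrizableSpace X] [MeasurableSpace X] [BorelSpace X] (ν : Measure X)
    [SFinite ν] {S : Set X} (hS : AnalyticSet S) : NullMeasurableSet S ν := by
  suffices NullMeasurableSet S ν.toFinite from this.mono_ac (absolutelyContinuous_toFinite ν)
  refine nullMeasurableSet_of_forall_lt_exists_subset fun c hc => ?_
  obtain ⟨K, hKS, hK, hcK⟩ := exists_isCompact_subset_lt_measure_of_analyticSet _ hS hc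
  exact ⟨K, hKS, hK.measurableSet, hcK⟩

lemma measurableSet_preimage_of_analyticSet {Ω X : Type*} [MeasurableSpace Ω] (μ : Measure Ω)
    [SFinite μ] [μ.IsComplete] [TopologicalSpace X] [TopologicalSpace.MetrizableSpace X]
    [MeasurableSpace X] [BorelSpace X] {f : Ω → X} (hf : Measurable f) {S : Set X}
    (hS : AnalyticSet S) : MeasurableSet (f ⁻¹' S) :=
  ((nullMeasurableSet_of_analyticSet (μ.map f) hS).preimage
    (hf.quasiMeasurePreserving μ)).measurable_of_complete

end AnalyticSet

section ClosedSelection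

/-- Weak measurability of a set-valued map: it hits each open set on a measurable event. For
closed-valued maps this is the measurability notion of the Kuratowski–Ryll-Nardzewski theorem; no
σ-algebra on `E` is involved, and the values may be empty. -/
def WeaklyMeasurable {Ω E : Type*} [MeasurableSpace Ω] [TopologicalSpace E] (Γ : Ω → Set E) :
    Prop :=
  ∀ U, IsOpen U → MeasurableSet {ω | (Γ ω ∩ U).Nonempty}

variable {Ω E : Type*} [MeasurableSpace Ω] [MeasurableSpace E]

lemma WeaklyMeasurable.exists_measurable_inter_ball [PseudoMetricSpace E]
    [TopologicalSpace.SeparableSpace E] [Nonempty E] {Γ : Ω → Set E} (hΓ : WeaklyMeasurable Γ)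
    (hne : ∀ ω, (Γ ω).Nonempty) {ε : ℝ} (hε : 0 < ε) :
    ∃ ξ : Ω → E, Measurable ξ ∧ (∀ ω, (Γ ω ∩ Metric.ball (ξ ω) ε).Nonempty) ∧
      WeaklyMeasurable fun ω => Γ ω ∩ Metric.ball (ξ ω) ε := by
  classical
  let e := TopologicalSpace.denseSeq E
  have hhit (ω : Ω) : ∃ n, (Γ ω ∩ Metric.ball (e n) ε).Nonempty := by
    obtain ⟨x, hx⟩ := hne ω
    obtain ⟨n, hn⟩ := (TopologicalSpace.denseRange_denseSeq E).exists_dist_lt x hε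
    exact ⟨n, x, hx, hn⟩
  have hfind : Measurable fun ω => Nat.find (hhit ω) :=
    measurable_find hhit fun n => hΓ _ Metric.isOpen_ball
  refine ⟨fun ω => e (Nat.find (hhit ω)), Measurable.of_discrete.comp hfind,
    fun ω => Nat.find_spec (hhit ω), fun U hU => ?_⟩
  have hsplit : {ω | (Γ ω ∩ Metric.ball (e (Nat.find (hhit ω))) ε ∩ U).Nonempty} =
      ⋃ n, {ω | Nat.find (hhit ω) = n} ∩ {ω | (Γ ω ∩ (Metric.ball (e n) ε ∩ U)).Nonempty} := by
    ext ω
    simp [inter_assoc]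
  rw [hsplit]
  exact .iUnion fun n => (hfind (measurableSet_singleton n)).inter
    (hΓ _ (Metric.isOpen_ball.inter hU))

lemma WeaklyMeasurable.exists_measurable_seq_dist_lt [PseudoMetricSpace E]
    [TopologicalSpace.SeparableSpace E] [Nonempty E] {Γ : Ω → Set E} (hΓ : WeaklyMeasurable Γ)
    (hne : ∀ ω, (Γ ω).Nonempty) {ε : ℕ → ℝ} (hε : ∀ n, 0 < ε n) :
    ∃ ξ : ℕ → Ω → E, (∀ n, Measurable (ξ n)) ∧
      ∀ ω n, ∃ x ∈ Γ ω, dist x (ξ n ω) < ε n ∧ dist x (ξ (n + 1) ω) < ε (n + 1) := by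
  choose c hcm hcne hcw using
    fun (n : ℕ) (Δ : {Δ : Ω → Set E // WeaklyMeasurable Δ ∧ ∀ ω, (Δ ω).Nonempty}) =>
      Δ.2.1.exists_measurable_inter_ball Δ.2.2 (hε n)
  let Δ : ℕ → {Δ : Ω → Set E // WeaklyMeasurable Δ ∧ ∀ ω, (Δ ω).Nonempty} := fun n =>
    Nat.rec ⟨Γ, hΓ, hne⟩ (fun n Δ => ⟨_, hcw n Δ, hcne n Δ⟩) n
  have hsub (n : ℕ) (ω : Ω) : (Δ n).1 ω ⊆ Γ ω := by
    induction n with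
    | zero => exact Subset.rfl
    | succ n ih => exact inter_subset_left.trans ih
  refine ⟨fun n => c n (Δ n), fun n => hcm n (Δ n), fun ω n => ?_⟩
  obtain ⟨x, ⟨hx, hxn⟩, hxn'⟩ := (Δ (n + 2)).2.2 ω
  exact ⟨x, hsub n ω hx, hxn, hxn'⟩

/-- The **Kuratowski–Ryll-Nardzewski selection theorem**. -/
theorem WeaklyMeasurable.exists_measurable_selection [TopologicalSpace E] [PolishSpace E]
    [BorelSpace E] [Nonempty E] {Γ : Ω → Set E} (hΓ : WeaklyMeasurable Γ)
    (hclosed : ∀ ω, IsClosed (Γ ω)) (hne : ∀ ω, (Γ ω).Nonempty) :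
    ∃ ξ : Ω → E, Measurable ξ ∧ ∀ ω, ξ ω ∈ Γ ω := by
  let := TopologicalSpace.upgradeIsCompletelyMetrizable E
  obtain ⟨ξ, hξ, hξΓ⟩ := hΓ.exists_measurable_seq_dist_lt hne (ε := fun n => (1 / 2) ^ n)
    fun n => by positivity
  choose x hxΓ hx hx' using hξΓ
  have hcauchy (ω : Ω) : CauchySeq fun n => ξ n ω := by
    refine cauchySeq_of_le_geometric (1 / 2) 2 (by norm_num) fun n => ?_
    calc dist (ξ n ω) (ξ (n + 1) ω) ≤ dist (x ω n) (ξ n ω) + dist (x ω n) (ξ (n + 1) ω) :=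
          dist_triangle_left _ _ _
      _ ≤ (1 / 2) ^ n + (1 / 2) ^ n :=
          add_le_add (hx ω n).le ((hx' ω n).le.trans
            (pow_le_pow_of_le_one (by norm_num) (by norm_num) n.le_succ))
      _ = 2 * (1 / 2) ^ n := (two_mul _).symm
  choose ζ hζ using fun ω => cauchySeq_tendsto_of_complete (hcauchy ω)
  refine ⟨ζ, measurable_of_tendsto_metrizable hξ (tendsto_pi_nhds.2 hζ), fun ω => ?_⟩
  have hdist : Tendsto (fun n => dist (ξ n ω) (x ω n)) atTop (𝓝 0) :=
    squeeze_zero (fun _ => dist_nonneg) (fun n => (dist_comm _ _).trans_le (hx ω n).le)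
      (tendsto_pow_atTop_nhds_zero_of_lt_one (by norm_num) (by norm_num))
  exact (hclosed ω).mem_of_tendsto ((hζ ω).congr_dist hdist) (.of_forall (hxΓ ω))

lemma exists_measurable_rightInverse_of_measurableSet_preimage_image {Y : Type*}
    [TopologicalSpace E] [PolishSpace E] [BorelSpace E] [Nonempty E] [TopologicalSpace Y]
    [T1Space Y] {g : E → Y} (hg : Continuous g) (f : Ω → Y)
    (hf : ∀ U, IsOpen U → MeasurableSet (f ⁻¹' (g '' U))) :
    ∃ ξ : Ω → E, Measurable ξ ∧ ∀ ω, f ω ∈ range g → g (ξ ω) = f ω := by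
  refine WeaklyMeasurable.exists_measurable_selection
    (Γ := fun ω => {x | f ω ∈ range g → g x = f ω}) (fun U hU => ?_) (fun ω => ?_) fun ω => ?_
  · obtain rfl | ⟨x₀, hx₀⟩ := U.eq_empty_or_nonempty
    · simp
    have hhit : {ω | ({x | f ω ∈ range g → g x = f ω} ∩ U).Nonempty} =
        (f ⁻¹' (g '' univ))ᶜ ∪ f ⁻¹' (g '' U) := by
      ext ω
      rw [image_univ]
      by_cases hω : f ω ∈ range g
      · simp only [hω, true_imp_iff, mem_ofPred_eq, mem_union, mem_compl_iff, mem_preimage,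
          not_true, false_or, Set.Nonempty, mem_inter_iff, mem_image, and_comm]
      · simp only [hω, false_imp_iff, mem_ofPred_eq, mem_union, mem_compl_iff, mem_preimage,
          not_false_eq_true, true_or, iff_true]
        exact ⟨x₀, trivial, hx₀⟩
    rw [hhit]
    exact (hf univ isOpen_univ).compl.union (hf U hU)
  · by_cases hω : f ω ∈ range g
    · simp only [hω, true_imp_iff]
      exact isClosed_singleton.preimage hg
    · simp only [hω, false_imp_iff, ofPred_true, isClosed_univ]
  · by_cases hω : f ω ∈ range g
    · exact hω.imp fun x hx _ => hx
    · exact ⟨Classical.arbitrary E, fun h => absurd h hω⟩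

end ClosedSelection

section ProductSpace

lemma exists_measurable_eq_preimage_prodMap {Ω E : Type*} [MeasurableSpace Ω] [MeasurableSpace E]
    {G : Set (Ω × E)} (hG : MeasurableSet G) :
    ∃ (f : Ω → ℕ → Bool) (H : Set ((ℕ → Bool) × E)), Measurable f ∧ MeasurableSet H ∧
      G = Prod.map f id ⁻¹' H := by
  induction G, hG using
    MeasurableSpace.induction_on_inter generateFrom_prod.symm isPiSystem_prod with
  | empty => exact ⟨fun _ _ => true, ∅, measurable_const, .empty, rfl⟩
  | basic t ht =>
    classical
    obtain ⟨A, hA, B, hB, rfl⟩ := ht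
    refine ⟨fun ω _ => decide (ω ∈ A), {x | x 0 = true} ×ˢ B,
      measurable_pi_lambda _ fun _ => measurable_to_bool (by simpa [preimage] using hA),
      (measurableSet_eq_fun (measurable_pi_apply 0) measurable_const).prod hB, ?_⟩
    ext ⟨ω, x⟩
    simp
  | compl t _ ih =>
    obtain ⟨f, H, hf, hH, rfl⟩ := ih
    exact ⟨f, Hᶜ, hf, hH.compl, rfl⟩
  | iUnion t _ _ ih =>
    choose f H hf hH ht using ih
    -- The sequences `f n ω` are interleaved along the pairing `ℕ × ℕ ≃ ℕ`.
    have hrow (n : ℕ) : Measurable fun p : (ℕ → Bool) × E =>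
        (fun j => p.1 (Nat.pair n j), p.2) := by fun_prop
    refine ⟨fun ω k => f k.unpair.1 ω k.unpair.2, _,
      measurable_pi_lambda _ fun k => (measurable_pi_apply _).comp (hf _),
      .iUnion fun n => hrow n (hH n), ?_⟩
    rw [preimage_iUnion]
    refine iUnion_congr fun n => (ht n).trans ?_
    ext ⟨ω, x⟩
    simp

variable {Ω E : Type*} [MeasurableSpace Ω] [MeasurableSpace E] [StandardBorelSpace E]
  {G : Set (Ω × E)}

/-- The **measurable projection theorem**. -/
theorem measurableSet_image_fst (μ : Measure Ω) [SFinite μ] [μ.IsComplete]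
    (hG : MeasurableSet G) : MeasurableSet (Prod.fst '' G) := by
  obtain ⟨f, H, hf, hH, rfl⟩ := exists_measurable_eq_preimage_prodMap hG
  have hproj : Prod.fst '' (Prod.map f id ⁻¹' H) = f ⁻¹' (Prod.fst '' H) := by
    ext ω
    simp
  rw [hproj]
  exact measurableSet_preimage_of_analyticSet μ hf (hH.analyticSet_image measurable_fst)

/-- The **Jankov–von Neumann–Aumann measurable selection theorem**. -/
theorem exists_measurable_selection (μ : Measure Ω) [SFinite μ] [μ.IsComplete]
    [Nonempty E] (hG : MeasurableSet G) :
    ∃ ξ : Ω → E, Measurable ξ ∧ ∀ ω ∈ Prod.fst '' G, (ω, ξ ω) ∈ G := by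
  obtain ⟨f, H, hf, hH, rfl⟩ := exists_measurable_eq_preimage_prodMap hG
  let := upgradeStandardBorel E
  have : PolishSpace ((ℕ → Bool) × E) := ⟨⟩
  have hHa := hH.analyticSet
  rw [AnalyticSet] at hHa
  obtain rfl | ⟨g, hg, rfl⟩ := hHa
  · exact ⟨fun _ => Classical.arbitrary E, measurable_const, by simp⟩
  have hg₁ : Continuous fun y => (g y).1 := continuous_fst.comp hg
  obtain ⟨ζ, hζ, hζf⟩ := exists_measurable_rightInverse_of_measurableSet_preimage_image hg₁ f
    fun U hU => measurableSet_preimage_of_analyticSet μ hf (hU.analyticSet_image hg₁)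
  refine ⟨fun ω => (g (ζ ω)).2, measurable_snd.comp (hg.measurable.comp hζ), ?_⟩
  rintro _ ⟨⟨ω, x⟩, ⟨y, hy⟩, rfl⟩
  exact ⟨ζ ω, Prod.ext (hζf ω ⟨y, congrArg Prod.fst hy⟩) rfl⟩

end ProductSpace

section Closure

lemma tendstoInMeasure_of_ae_edist_le {Ω E ι : Type*} {_ : MeasurableSpace Ω} {μ : Measure Ω}
    [EDist E] {f : ι → Ω → E} {g : Ω → E} {l : Filter ι} {u : ι → ℝ≥0∞} (hu : Tendsto u l (𝓝 0))
    (hfg : ∀ i, ∀ᵐ ω ∂μ, edist (f i ω) (g ω) ≤ u i) : TendstoInMeasure μ f l g := by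
  intro ε hε
  refine tendsto_const_nhds.congr' ?_
  filter_upwards [hu.eventually_lt_const hε] with i hi
  refine (measure_eq_zero_iff_ae_notMem.2 ?_).symm
  filter_upwards [hfg i] with ω hω
  exact (hω.trans_lt hi).not_ge

lemma ae_mem_closure_of_tendstoInMeasure {Ω E : Type*} {_ : MeasurableSpace Ω} {μ : Measure Ω}
    [PseudoEMetricSpace E] {Γ : Ω → Set E} {f : ℕ → Ω → E} {g : Ω → E}
    (hfΓ : ∀ n, ∀ᵐ ω ∂μ, f n ω ∈ Γ ω) (hfg : TendstoInMeasure μ f atTop g) :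
    ∀ᵐ ω ∂μ, g ω ∈ closure (Γ ω) := by
  obtain ⟨φ, -, hφ⟩ := hfg.exists_seq_tendsto_ae
  filter_upwards [hφ, ae_all_iff.2 hfΓ] with ω hω hΓω
  exact mem_closure_of_tendsto hω (.of_forall fun n => hΓω (φ n))

variable {Ω E : Type*} [MeasurableSpace Ω] [MeasurableSpace E] [StandardBorelSpace E]
  {Γ : Ω → Set E}

lemma measurableSet_setOf_mem_closure (μ : Measure Ω) [SFinite μ] [μ.IsComplete]
    [TopologicalSpace E] [SecondCountableTopology E] [OpensMeasurableSpace E]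
    (hΓ : MeasurableSet {p : Ω × E | p.2 ∈ Γ p.1}) :
    MeasurableSet {p : Ω × E | p.2 ∈ closure (Γ p.1)} := by
  let hit (U : Set E) : Set Ω := Prod.fst '' ({p : Ω × E | p.2 ∈ Γ p.1} ∩ Prod.snd ⁻¹' U)
  have hclosure : {p : Ω × E | p.2 ∈ closure (Γ p.1)} =
      ⋂ U ∈ TopologicalSpace.countableBasis E, {p | p.2 ∈ U → p.1 ∈ hit U} := by
    ext ⟨ω, x⟩
    simp [hit, (TopologicalSpace.isBasis_countableBasis E).mem_closure_iff, Set.Nonempty, and_comm]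
  rw [hclosure]
  refine .biInter (TopologicalSpace.countable_countableBasis E) fun U hU => ?_
  have hUm : MeasurableSet U := (TopologicalSpace.isOpen_of_mem_countableBasis hU).measurableSet
  exact (measurable_snd hUm).imp
    (measurable_fst (measurableSet_image_fst μ (hΓ.inter (measurable_snd hUm))))

variable [PseudoEMetricSpace E] [SecondCountableTopology E] [OpensMeasurableSpace E]

lemma exists_measurable_selection_edist_lt (μ : Measure Ω) [SFinite μ] [μ.IsComplete]
    (hΓ : MeasurableSet {p : Ω × E | p.2 ∈ Γ p.1})
    {ξ : Ω → E} (hξ : Measurable ξ) (hξΓ : ∀ᵐ ω ∂μ, ξ ω ∈ closure (Γ ω)) {ε : ℝ≥0∞} (hε : 0 < ε) :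
    ∃ f : Ω → E, Measurable f ∧ ∀ᵐ ω ∂μ, f ω ∈ Γ ω ∧ edist (f ω) (ξ ω) < ε := by
  obtain _ | _ := isEmpty_or_nonempty E
  · exact ⟨ξ, hξ, .of_forall fun ω => isEmptyElim (ξ ω)⟩
  have hnear : MeasurableSet {p : Ω × E | p.2 ∈ Γ p.1 ∧ edist p.2 (ξ p.1) < ε} :=
    hΓ.inter (measurableSet_lt (measurable_snd.edist (hξ.comp measurable_fst)) measurable_const)
  obtain ⟨f, hf, hfΓ⟩ := exists_measurable_selection μ hnear
  refine ⟨f, hf, ?_⟩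
  filter_upwards [hξΓ] with ω hω
  obtain ⟨x, hx, hxε⟩ := EMetric.mem_closure_iff.1 hω ε hε
  exact hfΓ ω ⟨(ω, x), ⟨hx, by rwa [edist_comm]⟩, rfl⟩

theorem ae_mem_closure_iff_exists_tendstoInMeasure (μ : Measure Ω) [SFinite μ] [μ.IsComplete]
    (hΓ : MeasurableSet {p : Ω × E | p.2 ∈ Γ p.1}) {ξ : Ω → E} (hξ : Measurable ξ) :
    (∀ᵐ ω ∂μ, ξ ω ∈ closure (Γ ω)) ↔
      ∃ f : ℕ → Ω → E, (∀ n, Measurable (f n) ∧ ∀ᵐ ω ∂μ, f n ω ∈ Γ ω) ∧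
        TendstoInMeasure μ f atTop ξ := by
  refine ⟨fun hξΓ => ?_, fun ⟨f, hf, hfξ⟩ =>
    ae_mem_closure_of_tendstoInMeasure (fun n => (hf n).2) hfξ⟩
  choose f hf hfΓ using fun n : ℕ =>
    exists_measurable_selection_edist_lt μ hΓ hξ hξΓ (ENNReal.inv_pos.2 (ENNReal.natCast_ne_top n))
  exact ⟨f, fun n => ⟨hf n, (hfΓ n).mono fun ω h => h.1⟩,
    tendstoInMeasure_of_ae_edist_le ENNReal.tendsto_inv_nat_nhds_zero
      fun n => (hfΓ n).mono fun ω h => h.2.le⟩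

end Closure

theorem stmt_3_general {Ω E : Type*} [MeasurableSpace Ω] (μ : Measure Ω) [SFinite μ]
    [μ.IsComplete] [PseudoEMetricSpace E] [SecondCountableTopology E] [MeasurableSpace E]
    [OpensMeasurableSpace E] [StandardBorelSpace E] (Γ : Ω → Set E)
    (hΓ : MeasurableSet {p : Ω × E | p.2 ∈ Γ p.1}) :
    MeasurableSet {p : Ω × E | p.2 ∈ closure (Γ p.1)} ∧
    {ξ : Ω → E | Measurable ξ ∧ ∀ᵐ ω ∂μ, ξ ω ∈ closure (Γ ω)} =
      {ξ | Measurable ξ ∧ ∃ f : ℕ → Ω → E,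
        (∀ n, f n ∈ {η : Ω → E | Measurable η ∧ ∀ᵐ ω ∂μ, η ω ∈ Γ ω}) ∧
          TendstoInMeasure μ f atTop ξ} :=
  ⟨measurableSet_setOf_mem_closure μ hΓ,
    Set.ext fun _ => and_congr_right (ae_mem_closure_iff_exists_tendstoInMeasure μ hΓ)⟩

/-- Proposition: for a random set `Γ`, the pointwise closure `ω ↦ cl Γ(ω)` is a random
closed set and `L⁰(cl Γ, F) = cl₀ L⁰(Γ, F)`. -/
theorem stmt_3 {Ω : Type*} {d : ℕ} [F : MeasurableSpace Ω]
    (μ : Measure Ω) [IsProbabilityMeasure μ] [μ.IsComplete]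
    (Γ : Ω → Set (Ed d)) (hΓ : GraphMeasurable F Γ) :
    GraphMeasurable F (fun ω => closure (Γ ω)) ∧
    Sel μ F (fun ω => closure (Γ ω)) = clProb μ (Sel μ F Γ) :=
  stmt_3_general μ Γ hΓ
end
end

section
/- Let X be a random closed set in ℝ^d with X(ω) nonempty and convex for almost all ω, and let H ⊆ F be a sub-σ-algebra such that X admits an integrable H-measurable selection. Then cm(X|H) ⊆ E(X|H) ⊆ CM(X|H) almost surely, where cm(X|H) is the H-core of X, E(X|H) is the conditional expectation of X, and CM(X|H) is the H-conditional convex hull of X. In particular, for every ξ ∈ L¹(X,F), E(ξ|H) ∈ CM(X|H) almost surely. -/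
open MeasureTheory Filter Set Topology
open scoped Pointwise ENNReal

noncomputable section

/-- The family `{E(ξ|H) : ξ ∈ L¹(X,F)}` of conditional expectations of the integrable
selections of `X`. -/
def condexpSet {Ω : Type*} {d : ℕ} {F : MeasurableSpace Ω} (μ : Measure Ω)
    (H : MeasurableSpace Ω) (X : Ω → Set (Ed d)) : Set (Ω → Ed d) :=
  {g | ∃ ξ : Ω → Ed d, Measurable[F] ξ ∧ Integrable ξ μ ∧
    (∀ᵐ ω ∂μ, ξ ω ∈ X ω) ∧ g = μ[ξ|H]}

/-- The closure of a family of random vectors in `L¹`. -/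
def cl1 {Ω : Type*} {d : ℕ} {F : MeasurableSpace Ω} (μ : Measure Ω)
    (S : Set (Ω → Ed d)) : Set (Ω → Ed d) :=
  {g | Integrable g μ ∧ ∃ f : ℕ → Ω → Ed d, (∀ n, f n ∈ S) ∧
    Tendsto (fun n => eLpNorm (f n - g) 1 μ) atTop (𝓝 0)}

/-- The closure of a family of random vectors with respect to convergence in probability. -/
def clInProb {Ω : Type*} {d : ℕ} {F : MeasurableSpace Ω} (μ : Measure Ω)
    (S : Set (Ω → Ed d)) : Set (Ω → Ed d) :=
  {g | ∃ f : ℕ → Ω → Ed d, (∀ n, f n ∈ S) ∧ TendstoInMeasure μ f atTop g}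

/-- `C` is the `H`-core (conditional core) of `X`: the largest `H`-measurable random set
contained in `X` almost surely. -/
def IsCore {Ω : Type*} {d : ℕ} {F : MeasurableSpace Ω} (μ : Measure Ω)
    (H : MeasurableSpace Ω) (Γ C : Ω → Set (Ed d)) : Prop :=
  GraphMeasurable H C ∧ (∀ᵐ ω ∂μ, C ω ⊆ Γ ω) ∧
    ∀ Z : Ω → Set (Ed d), GraphMeasurable H Z → (∀ᵐ ω ∂μ, Z ω ⊆ Γ ω) →
      ∀ᵐ ω ∂μ, Z ω ⊆ C ω

/-- `M` is the `H`-conditional convex hull of `X`: the smallest `H`-measurable random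
closed convex set containing `X` almost surely. -/
def IsCondConvexHull {Ω : Type*} {d : ℕ} {F : MeasurableSpace Ω} (μ : Measure Ω)
    (H : MeasurableSpace Ω) (X M : Ω → Set (Ed d)) : Prop :=
  GraphMeasurable H M ∧ (∀ᵐ ω ∂μ, IsClosed (M ω) ∧ Convex ℝ (M ω)) ∧
    (∀ᵐ ω ∂μ, X ω ⊆ M ω) ∧
    ∀ Z : Ω → Set (Ed d), GraphMeasurable H Z →
      (∀ᵐ ω ∂μ, IsClosed (Z ω) ∧ Convex ℝ (Z ω)) → (∀ᵐ ω ∂μ, X ω ⊆ Z ω) →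
      ∀ᵐ ω ∂μ, M ω ⊆ Z ω

/-!
The conditional expectation of a random vector is its average over a regular conditional
distribution, which is carried by every `H`-measurable closed convex random set in which the vector
takes its values. Hence the conditional expectation lies in such a set as well, and so do
`L¹`-limits of conditional expectations. Conversely, an integrable `H`-measurable selection of `X`
is its own conditional expectation. Both facts compare integrable selections, and they become almost
sure inclusions of sets by measurable selection: if `A ⊄ B` with positive probability, then
some integrable selection of `A` avoids `B` with positive probability.

For the measurable selection, a graph in `H ⊗ B(E)` is the preimage of a Borel graph under a
measurable map from `Ω` to the Cantor space. The projection of that Borel graph is analytic, so by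
capacitability it contains, up to small measure, the image of a compact set `K` parametrizing points
of the graph. As `K` is a continuous image of the Cantor set in `ℝ`, the least preimage gives a
measurable section over the image.
-/

section MeasurableSelection

variable {X Z : Type*} [TopologicalSpace X] [TopologicalSpace Z] [MeasurableSpace Z]

theorem exists_measurable_rightInvOn_range_of_isCompact_real [T2Space Z] [OpensMeasurableSpace Z]
    {L : Set ℝ} (hL : IsCompact L) (hne : L.Nonempty) {g : L → Z} (hg : Continuous g) :
    ∃ s : Z → L, Measurable s ∧ RightInvOn s g (range g) := by
  have : CompactSpace L := isCompact_iff_compactSpace.mp hL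
  have : Nonempty L := hne.to_subtype
  have hleast (y : range g) : ∃ x, IsLeast (g ⁻¹' {y.1}) x :=
    (isClosed_singleton.preimage hg).isCompact.exists_isLeast y.2
  choose s hs using hleast
  have hs_meas : Measurable s := by
    refine (MeasurableEmbedding.subtype_coe hL.measurableSet).measurable_comp_iff.1 <|
      measurable_of_Iic fun t => ?_
    have himage : ((↑) ∘ s) ⁻¹' Iic t = (↑) ⁻¹' (g '' {x | (x : ℝ) ≤ t}) := by
      ext y
      refine ⟨fun hy => ⟨s y, hy, (hs y).1⟩, ?_⟩
      rintro ⟨x, hxt, hxy⟩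
      exact (Subtype.coe_le_coe.2 ((hs y).2 hxy)).trans hxt
    have hclosed : IsClosed {x : L | (x : ℝ) ≤ t} :=
      isClosed_le continuous_subtype_val continuous_const
    rw [himage]
    exact measurable_subtype_coe (hclosed.isCompact.image hg).isClosed.measurableSet
  obtain ⟨s', hs'_meas, hs'⟩ := (MeasurableEmbedding.subtype_coe
    (isCompact_range hg).isClosed.measurableSet).exists_measurable_extend hs_meas fun _ => ‹_›
  exact ⟨s', hs'_meas, fun y hy => (congrArg g (congrFun hs' ⟨y, hy⟩)).trans (hs ⟨y, hy⟩).1⟩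

theorem exists_measurable_rightInvOn_range [T2Space Z] [OpensMeasurableSpace Z] [CompactSpace X]
    [TopologicalSpace.MetrizableSpace X] [Nonempty X] [MeasurableSpace X] [BorelSpace X]
    {g : X → Z} (hg : Continuous g) :
    ∃ s : Z → X, Measurable s ∧ RightInvOn s g (range g) := by
  let _ := TopologicalSpace.metrizableSpaceMetric X
  obtain ⟨φ, hφ, hφ_surj⟩ := exists_nat_bool_continuous_surjective_of_compact X
  let ψ : cantorSet → X := φ ∘ cantorSetHomeomorphNatToBool
  have hψ : Continuous ψ := hφ.comp cantorSetHomeomorphNatToBool.continuous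
  have hψ_surj : ψ.Surjective := hφ_surj.comp cantorSetHomeomorphNatToBool.surjective
  obtain ⟨s, hs, hgs⟩ := exists_measurable_rightInvOn_range_of_isCompact_real isCompact_cantorSet
    ⟨0, zero_mem_cantorSet⟩ (hg.comp hψ)
  rw [hψ_surj.range_comp] at hgs
  exact ⟨ψ ∘ s, hψ.measurable.comp hs, hgs⟩

theorem exists_forall_lt_measure_image_bounded_initial {Z : Type*} [MeasurableSpace Z]
    {ν : Measure Z} {g : (ℕ → ℕ) → Z} {r : ℝ≥0∞} (hr : r < ν (range g)) :
    ∃ b : ℕ → ℕ, ∀ m, r < ν (g '' {x | ∀ i < m, x i ≤ b i}) := by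
  have hstep (m : ℕ) (S : Set (ℕ → ℕ)) :
      ∃ n, r < ν (g '' S) → r < ν (g '' (S ∩ {x | x m ≤ n})) := by
    by_cases hS : r < ν (g '' S)
    · -- Continuity from below of the outer measure; the images need not be measurable.
      have hunion : g '' S = ⋃ n : ℕ, g '' (S ∩ {x | x m ≤ n}) := by
        rw [← image_iUnion, ← inter_iUnion, iUnion_eq_univ_iff.2 fun x => ⟨x m, le_refl (x m)⟩,
          inter_univ]
      have hmono : Monotone fun n : ℕ => g '' (S ∩ {x | x m ≤ n}) := fun a b hab =>
        image_mono (inter_subset_inter_right _ fun x (hx : x m ≤ a) => hx.trans hab)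
      rw [hunion, hmono.measure_iUnion] at hS
      exact (lt_iSup_iff.1 hS).imp fun n hn _ => hn
    · exact ⟨0, fun h => absurd h hS⟩
  choose N hN using hstep
  let S : ℕ → Set (ℕ → ℕ) := Nat.rec univ fun m S => S ∩ {x | x m ≤ N m S}
  have hS (m : ℕ) : S m = {x | ∀ i < m, x i ≤ N i (S i)} := by
    induction m with
    | zero => simp [S]
    | succ m ih =>
      ext x
      have hsucc : S (m + 1) = S m ∩ {x | x m ≤ N m (S m)} := rfl
      rw [hsucc, mem_inter_iff, Set.ext_iff.1 ih x]
      exact Nat.forall_lt_succ_right.symm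
  refine ⟨fun i => N i (S i), fun m => hS m ▸ ?_⟩
  induction m with
  | zero => simpa [S] using hr
  | succ m ih => exact hN m (S m) ih

theorem exists_setOf_bounded_initial_subset {b : ℕ → ℕ} {V : Set (ℕ → ℕ)} (hV : IsOpen V)
    (hbV : Iic b ⊆ V) : ∃ m, {x | ∀ i < m, x i ≤ b i} ⊆ V := by
  let _ := PiNat.metricSpaceNatNat
  have hbox : IsCompact (Iic b) := Icc_bot (a := b) ▸ isCompact_Icc
  obtain ⟨δ, hδ, hδV⟩ := hbox.exists_thickening_subset_open hV hbV
  obtain ⟨m, hm⟩ := exists_pow_lt_of_lt_one hδ one_half_lt_one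
  refine ⟨m, fun x hx => hδV (Metric.mem_thickening_iff.2 ⟨x ⊓ b, mem_Iic.2 inf_le_right, ?_⟩)⟩
  exact (PiNat.mem_cylinder_iff_dist_le.1 fun i hi => (inf_eq_left.2 (hx i hi)).symm).trans_lt hm

/-- **Choquet capacitability** of analytic sets. -/
theorem exists_isCompact_lt_measure_image [PolishSpace X] {ν : Measure Z} [ν.OuterRegular]
    {g : X → Z} (hg : Continuous g) {r : ℝ≥0∞} (hr : r < ν (range g)) :
    ∃ K, IsCompact K ∧ r < ν (g '' K) := by
  obtain _ | _ := isEmpty_or_nonempty X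
  · simp [range_eq_empty] at hr
  obtain ⟨f, hf, hf_surj⟩ := PolishSpace.exists_nat_nat_continuous_surjective X
  obtain ⟨q, hrq, hq⟩ := exists_between hr
  rw [← hf_surj.range_comp] at hq
  obtain ⟨b, hb⟩ := exists_forall_lt_measure_image_bounded_initial hq
  have hbox : IsCompact (Iic b) := Icc_bot (a := b) ▸ isCompact_Icc
  refine ⟨f '' Iic b, hbox.image hf, hrq.trans_le (not_lt.1 fun hlt => ?_)⟩
  obtain ⟨U, hU_sup, hU, hUq⟩ := Set.exists_isOpen_lt_of_lt _ _ hlt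
  obtain ⟨m, hm⟩ := exists_setOf_bounded_initial_subset (hU.preimage (hg.comp hf))
    (image_subset_iff.1 (image_comp g f _ ▸ hU_sup))
  exact (hb m).not_ge ((measure_mono (image_subset_iff.2 hm)).trans hUq.le)

theorem exists_measurable_section_of_analyticSet {E : Type*} [T2Space Z] [OpensMeasurableSpace Z]
    [TopologicalSpace E] [MeasurableSpace E] [BorelSpace E] {ν : Measure Z} [ν.OuterRegular]
    {A : Set (Z × E)} (hA : AnalyticSet A) {r : ℝ≥0∞} (hr : r < ν (Prod.fst '' A)) :
    ∃ (B : Set Z) (η : Z → E), MeasurableSet B ∧ r < ν B ∧ Measurable η ∧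
      ∀ z ∈ B, (z, η z) ∈ A := by
  obtain ⟨Y, _, _, f, hf, rfl⟩ := analyticSet_iff_exists_polishSpace_range.1 hA
  rw [← range_comp] at hr
  obtain ⟨K, hK, hrK⟩ := exists_isCompact_lt_measure_image (continuous_fst.comp hf) hr
  borelize Y
  have : CompactSpace K := isCompact_iff_compactSpace.mp hK
  have : Nonempty K := (nonempty_of_measure_ne_zero hrK.ne_bot).of_image.to_subtype
  have hfK : Continuous fun x : K => f x := hf.comp continuous_subtype_val
  obtain ⟨s, hs, hfs⟩ := exists_measurable_rightInvOn_range (continuous_fst.comp hfK)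
  refine ⟨_, fun z => (f (s z)).2, (hK.image (continuous_fst.comp hf)).isClosed.measurableSet, hrK,
    (continuous_snd.comp hfK).measurable.comp hs, ?_⟩
  rintro z ⟨x, hx, rfl⟩
  exact ⟨s _, Prod.ext (hfs ⟨⟨x, hx⟩, rfl⟩) rfl⟩

theorem exists_measurable_preimage_cantorSpace_prod {α E : Type*} [MeasurableSpace α]
    [MeasurableSpace E] {A : Set (α × E)} (hA : MeasurableSet A) :
    ∃ φ : α → ℕ → Bool, Measurable φ ∧
      ∃ A' : Set ((ℕ → Bool) × E), MeasurableSet A' ∧ A = Prod.map φ id ⁻¹' A' := by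
  classical
  induction A, hA using MeasurableSpace.induction_on_inter generateFrom_prod.symm
    isPiSystem_prod with
  | empty => exact ⟨fun _ _ => true, measurable_const, ∅, .empty, rfl⟩
  | basic t ht =>
    obtain ⟨u, hu, v, hv, rfl⟩ := ht
    refine ⟨fun a _ => decide (a ∈ u), measurable_pi_iff.2 fun _ => ?_,
      {x | x 0 = true} ×ˢ v, ?_, ?_⟩
    · exact measurable_to_bool (by simpa [preimage] using hu)
    · exact (measurableSet_eq_fun (by fun_prop) measurable_const).prod hv
    · ext ⟨a, e⟩
      simp
  | compl t _ ih =>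
    obtain ⟨φ, hφ, A', hA', rfl⟩ := ih
    exact ⟨φ, hφ, A'ᶜ, hA'.compl, rfl⟩
  | iUnion t _ _ ih =>
    choose φ hφ A' hA' htA using ih
    let e : (ℕ → Bool) ≃ₜ (ℕ → ℕ → Bool) := cantorSpaceHomeomorphNatToCantorSpace
    have he (n : ℕ) : Measurable fun x => e x n :=
      ((continuous_apply n).comp e.continuous).measurable
    refine ⟨fun a => e.symm fun n => φ n a,
      e.symm.continuous.measurable.comp (measurable_pi_iff.2 hφ),
      ⋃ n, Prod.map (fun x => e x n) id ⁻¹' A' n,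
      .iUnion fun n => (he n).prodMap measurable_id (hA' n), ?_⟩
    ext ⟨a, x⟩
    simp [htA]

theorem exists_measurable_section {α E : Type*} {mα : MeasurableSpace α} [MeasurableSpace E]
    [StandardBorelSpace E] {μ : Measure α} [IsFiniteMeasure μ] {A : Set (α × E)}
    (hA : MeasurableSet A) {r : ℝ≥0∞} (hr : r < μ (Prod.fst '' A)) :
    ∃ (B : Set α) (η : α → E), MeasurableSet B ∧ r < μ B ∧ Measurable η ∧
      ∀ a ∈ B, (a, η a) ∈ A := by
  let _ := upgradeStandardBorel E
  have : PolishSpace ((ℕ → Bool) × E) := {}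
  obtain ⟨φ, hφ, A', hA', rfl⟩ := exists_measurable_preimage_cantorSpace_prod hA
  have hproj : Prod.fst '' (Prod.map φ id ⁻¹' A' : Set (α × E)) = φ ⁻¹' (Prod.fst '' A') := by
    ext a
    simp
  rw [hproj] at hr
  obtain ⟨B, η, hB, hrB, hη, hηA⟩ := exists_measurable_section_of_analyticSet hA'.analyticSet
    (hr.trans_le (Measure.le_map_apply hφ.aemeasurable _))
  rw [Measure.map_apply hφ hB] at hrB
  exact ⟨φ ⁻¹' B, η ∘ φ, hφ hB, hrB, hη.comp hφ, fun a ha => hηA _ ha⟩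

end MeasurableSelection

section MeasurableGraph

variable {Ω E : Type*} [MeasurableSpace E]

/-- A set-valued map `Γ : Ω → Set E` is a random set with respect to `m`: its graph belongs to
`m ⊗ B(E)`. -/
def HasMeasurableGraph (m : MeasurableSpace Ω) (Γ : Ω → Set E) : Prop :=
  MeasurableSet[m.prod inferInstance] {p : Ω × E | p.2 ∈ Γ p.1}

theorem HasMeasurableGraph.diff {m : MeasurableSpace Ω} {A B : Ω → Set E}
    (hA : HasMeasurableGraph m A) (hB : HasMeasurableGraph m B) :
    HasMeasurableGraph m fun ω => A ω \ B ω :=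
  MeasurableSet.diff hA hB

theorem HasMeasurableGraph.insert [MeasurableEq E] {m : MeasurableSpace Ω} {A : Ω → Set E}
    (hA : HasMeasurableGraph m A) {ξ : Ω → E} (hξ : Measurable ξ) :
    HasMeasurableGraph m fun ω => insert (ξ ω) (A ω) :=
  (measurableSet_eq_fun measurable_snd (hξ.comp measurable_fst)).union hA

end MeasurableGraph

section L1Closure

variable {Ω E : Type*} [NormedAddCommGroup E] {mΩ : MeasurableSpace Ω} {μ : Measure Ω}

/-- The integrable functions that are `L¹`-limits of sequences from `S`, as functions rather than
almost-everywhere classes. -/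
def l1Closure (μ : Measure Ω) (S : Set (Ω → E)) : Set (Ω → E) :=
  {g | Integrable g μ ∧ ∃ f : ℕ → Ω → E, (∀ n, f n ∈ S) ∧
    Tendsto (fun n => eLpNorm (f n - g) 1 μ) atTop (𝓝 0)}

theorem mem_l1Closure {S : Set (Ω → E)} {g : Ω → E} (hg : Integrable g μ) (hgS : g ∈ S) :
    g ∈ l1Closure μ S :=
  ⟨hg, fun _ => g, fun _ => hgS, by simp⟩

theorem ae_mem_of_mem_l1Closure {S : Set (Ω → E)} {X : Ω → Set E} (hX : ∀ᵐ ω ∂μ, IsClosed (X ω))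
    (hS_meas : ∀ f ∈ S, AEStronglyMeasurable f μ) (hS : ∀ f ∈ S, ∀ᵐ ω ∂μ, f ω ∈ X ω)
    {g : Ω → E} (hg : g ∈ l1Closure μ S) : ∀ᵐ ω ∂μ, g ω ∈ X ω := by
  obtain ⟨hg_int, f, hf, hfg⟩ := hg
  obtain ⟨k, -, hk⟩ := (tendstoInMeasure_of_tendsto_eLpNorm one_ne_zero
    (fun n => hS_meas _ (hf n)) hg_int.aestronglyMeasurable hfg).exists_seq_tendsto_ae
  filter_upwards [hX, hk, ae_all_iff.2 fun n => hS _ (hf n)] with ω hclosed hlim hmem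
  exact hclosed.mem_of_tendsto hlim (Eventually.of_forall fun n => hmem (k n))

end L1Closure

section IntegrableSelections

variable {Ω E : Type*} [NormedAddCommGroup E] [MeasurableSpace E] {H mΩ : MeasurableSpace Ω}
  {μ : Measure Ω} {A B : Ω → Set E}

/-- The family `L¹(X, m)` of integrable `m`-measurable selections of `X`, as functions rather than
almost-everywhere classes. -/
def integrableSelections (μ : Measure Ω) (m : MeasurableSpace Ω) (X : Ω → Set E) : Set (Ω → E) :=
  {ξ | Measurable[m] ξ ∧ Integrable ξ μ ∧ ∀ᵐ ω ∂μ, ξ ω ∈ X ω}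

theorem piecewise_mem_integrableSelections (hH : H ≤ mΩ) {S : Set Ω} [DecidablePred (· ∈ S)]
    (hS : MeasurableSet[H] S) {η ξ : Ω → E} (hη : Measurable[H] η) (hη_int : IntegrableOn η S μ)
    (hηA : ∀ ω ∈ S, η ω ∈ A ω) (hξ : ξ ∈ integrableSelections μ H A) :
    S.piecewise η ξ ∈ integrableSelections μ H A := by
  obtain ⟨hξ_meas, hξ_int, hξA⟩ := hξ
  refine ⟨hη.piecewise hS hξ_meas, Integrable.piecewise (hH S hS) hη_int hξ_int.integrableOn, ?_⟩
  filter_upwards [hξA] with ω hω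
  by_cases hωS : ω ∈ S
  · rw [piecewise_eq_of_mem _ _ _ hωS]
    exact hηA ω hωS
  · rwa [piecewise_eq_of_notMem _ _ _ hωS]

theorem ae_subset_of_integrableSelections_subset [CompleteSpace E] [SecondCountableTopology E]
    [BorelSpace E] [IsFiniteMeasure μ] (hH : H ≤ mΩ) (hA : HasMeasurableGraph H A)
    (hB : HasMeasurableGraph H B) (hne : (integrableSelections μ H A).Nonempty)
    (hAB : integrableSelections μ H A ⊆ integrableSelections μ H B) :
    ∀ᵐ ω ∂μ, A ω ⊆ B ω := by
  classical
  obtain ⟨ξ, hξ⟩ := hne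
  by_contra hnot
  have hproj : 0 < μ.trim hH (Prod.fst '' {p : Ω × E | p.2 ∈ A p.1 \ B p.1}) := by
    refine pos_iff_ne_zero.2 fun h0 => hnot <|
      measure_mono_null (fun ω hω => ?_) (measure_eq_zero_of_trim_eq_zero hH h0)
    obtain ⟨x, hx⟩ := not_subset.1 hω
    exact ⟨(ω, x), hx, rfl⟩
  obtain ⟨S, η, hS, hS_pos, hη, hηAB⟩ := exists_measurable_section (hA.diff hB) hproj
  rw [trim_measurableSet_eq hH hS] at hS_pos
  have hcover : S = ⋃ n : ℕ, S ∩ {ω | ‖η ω‖ ≤ n} := by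
    rw [← inter_iUnion, eq_comm, inter_eq_left]
    exact fun ω _ => mem_iUnion.2 (exists_nat_ge ‖η ω‖)
  refine hS_pos.ne' (hcover ▸ measure_iUnion_null fun n => ?_)
  have hSn : MeasurableSet[H] (S ∩ {ω | ‖η ω‖ ≤ n}) :=
    hS.inter (hη (measurable_norm measurableSet_Iic))
  have hη_int : IntegrableOn η (S ∩ {ω | ‖η ω‖ ≤ n}) μ :=
    Measure.integrableOn_of_bounded (measure_ne_top μ _)
      (hη.mono hH le_rfl).aestronglyMeasurable
      ((ae_restrict_mem (hH _ hSn)).mono fun ω hω => hω.2)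
  have hmemB := (hAB (piecewise_mem_integrableSelections hH hSn hη hη_int
    (fun ω hω => (hηAB ω hω.1).1) hξ)).2.2
  refine measure_eq_zero_iff_ae_notMem.2 ?_
  filter_upwards [hmemB] with ω hωB hω
  rw [piecewise_eq_of_mem _ _ _ hω] at hωB
  exact (hηAB ω hω.1).2 hωB

variable [NormedSpace ℝ E] [BorelSpace E] [SecondCountableTopology E] [IsFiniteMeasure μ]

theorem integrableSelections_subset_condExp_image (hH : H ≤ mΩ) :
    integrableSelections μ H A ⊆ (fun ξ => μ[ξ|H]) '' integrableSelections μ mΩ A :=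
  fun ξ ⟨hξ, hξ_int, hξA⟩ => ⟨ξ, ⟨hξ.mono hH le_rfl, hξ_int, hξA⟩,
    condExp_of_stronglyMeasurable hH hξ.stronglyMeasurable hξ_int⟩

variable [CompleteSpace E]

theorem condExp_comap_mem {β : Type*} {mβ : MeasurableSpace β} {D : β → Set E}
    (hD : HasMeasurableGraph mβ D) {T : Ω → β} (hT : Measurable T) {ξ : Ω → E}
    (hξ : Integrable ξ μ) (hDT : ∀ᵐ ω ∂μ, IsClosed (D (T ω)) ∧ Convex ℝ (D (T ω)))
    (hξD : ∀ᵐ ω ∂μ, ξ ω ∈ D (T ω)) : ∀ᵐ ω ∂μ, (μ[ξ|mβ.comap T]) ω ∈ D (T ω) := by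
  have hpair : AEMeasurable (fun ω => (T ω, ξ ω)) μ := hT.aemeasurable.prodMk hξ.aemeasurable
  have hcond_mem : ∀ᵐ ω ∂μ, ∀ᵐ x ∂ProbabilityTheory.condDistrib ξ T μ (T ω), x ∈ D (T ω) := by
    refine ae_of_ae_map hT.aemeasurable (Measure.ae_ae_of_ae_compProd
      (p := fun p => p.2 ∈ D p.1) ?_)
    rw [ProbabilityTheory.compProd_map_condDistrib hξ.aemeasurable]
    exact (ae_map_iff hpair hD).2 hξD
  have hcond_int : ∀ᵐ ω ∂μ, Integrable id (ProbabilityTheory.condDistrib ξ T μ (T ω)) :=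
    Integrable.condDistrib_ae (f := Prod.snd) hT.aemeasurable hξ.aemeasurable
      ((integrable_map_measure measurable_snd.aestronglyMeasurable hpair).2 hξ)
  filter_upwards [ProbabilityTheory.condExp_ae_eq_integral_condDistrib' hT hξ, hcond_int,
    hcond_mem, hDT] with ω hcond hint hmem hDω
  rw [hcond]
  exact hDω.2.integral_mem hDω.1 hmem hint

theorem HasMeasurableGraph.condExp_mem (hH : H ≤ mΩ) (hA : HasMeasurableGraph H A)
    (hA_closed_convex : ∀ᵐ ω ∂μ, IsClosed (A ω) ∧ Convex ℝ (A ω)) {ξ : Ω → E}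
    (hξ : Integrable ξ μ) (hξA : ∀ᵐ ω ∂μ, ξ ω ∈ A ω) : ∀ᵐ ω ∂μ, (μ[ξ|H]) ω ∈ A ω := by
  have h := condExp_comap_mem hA (measurable_id'' hH) hξ hA_closed_convex hξA
  rwa [MeasurableSpace.comap_id] at h

end IntegrableSelections

theorem stmt_16_general {Ω E : Type*} (H : MeasurableSpace Ω) {F : MeasurableSpace Ω}
    [NormedAddCommGroup E] [NormedSpace ℝ E] [CompleteSpace E] [SecondCountableTopology E]
    [MeasurableSpace E] [BorelSpace E] (μ : Measure Ω) [IsFiniteMeasure μ] (hHF : H ≤ F)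
    {X C M Y : Ω → Set E} (hXsel : (integrableSelections μ H X).Nonempty)
    (hC : HasMeasurableGraph H C) (hCX : ∀ᵐ ω ∂μ, C ω ⊆ X ω)
    (hM : HasMeasurableGraph H M) (hM_closed_convex : ∀ᵐ ω ∂μ, IsClosed (M ω) ∧ Convex ℝ (M ω))
    (hXM : ∀ᵐ ω ∂μ, X ω ⊆ M ω) (hY : HasMeasurableGraph H Y)
    (hYsel : ∀ η, η ∈ integrableSelections μ H Y ↔
      ∃ g ∈ l1Closure μ ((fun ξ => μ[ξ|H]) '' integrableSelections μ F X), η =ᵐ[μ] g) :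
    (∀ᵐ ω ∂μ, C ω ⊆ Y ω ∧ Y ω ⊆ M ω) ∧
      ∀ ξ ∈ integrableSelections μ F X, ∀ᵐ ω ∂μ, (μ[ξ|H]) ω ∈ M ω := by
  have hcondExp : ∀ ξ ∈ integrableSelections μ F X, ∀ᵐ ω ∂μ, (μ[ξ|H]) ω ∈ M ω :=
    fun ξ ⟨_, hξ, hξX⟩ => hM.condExp_mem hHF hM_closed_convex hξ <| by
      filter_upwards [hξX, hXM] with ω hω hsub using hsub hω
  have hXY : integrableSelections μ H X ⊆ integrableSelections μ H Y := fun ξ hξ =>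
    (hYsel ξ).2 ⟨ξ, mem_l1Closure hξ.2.1 (integrableSelections_subset_condExp_image hHF hξ), .rfl⟩
  have hYM : integrableSelections μ H Y ⊆ integrableSelections μ H M := by
    intro η hη
    obtain ⟨g, hg, hηg⟩ := (hYsel η).1 hη
    have hgM : ∀ᵐ ω ∂μ, g ω ∈ M ω := ae_mem_of_mem_l1Closure (hM_closed_convex.mono fun _ h => h.1)
      (forall_mem_image.2 fun _ _ => integrable_condExp.aestronglyMeasurable)
      (forall_mem_image.2 hcondExp) hg
    exact ⟨hη.1, hη.2.1, by filter_upwards [hηg, hgM] with ω heq hmem using heq ▸ hmem⟩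
  obtain ⟨ξ, hξ⟩ := hXsel
  -- `C` need not have an integrable selection of its own, so `ξ` is adjoined to it.
  have hCξX : ∀ᵐ ω ∂μ, insert (ξ ω) (C ω) ⊆ X ω := by
    filter_upwards [hξ.2.2, hCX] with ω hω hsub using insert_subset hω hsub
  have hCY : ∀ᵐ ω ∂μ, insert (ξ ω) (C ω) ⊆ Y ω :=
    ae_subset_of_integrableSelections_subset hHF (hC.insert hξ.1) hY
      ⟨ξ, hξ.1, hξ.2.1, .of_forall fun _ => mem_insert _ _⟩
      fun η ⟨hη, hη_int, hηC⟩ => hXY ⟨hη, hη_int, by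
        filter_upwards [hηC, hCξX] with ω hω hsub using hsub hω⟩
  refine ⟨?_, hcondExp⟩
  filter_upwards [hCY, ae_subset_of_integrableSelections_subset hHF hY hM ⟨ξ, hXY hξ⟩ hYM]
    with ω hCω hYω using ⟨(subset_insert _ _).trans hCω, hYω⟩

theorem condexpSet_eq_image {Ω : Type*} {d : ℕ} {F : MeasurableSpace Ω} (μ : Measure Ω)
    (H : MeasurableSpace Ω) (X : Ω → Set (Ed d)) :
    condexpSet μ H X = (fun ξ => μ[ξ|H]) '' integrableSelections μ F X := by
  ext g
  simp only [condexpSet, integrableSelections, mem_image, mem_ofPred_eq, and_assoc, eq_comm]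

/-- Proposition: for an a.s. nonempty random closed convex set `X` admitting an integrable
`H`-measurable selection, `cm(X|H) ⊆ E(X|H) ⊆ CM(X|H)` a.s.; in particular
`E(ξ|H) ∈ CM(X|H)` a.s. for every `ξ ∈ L¹(X,F)`. -/
theorem stmt_16 {Ω : Type*} {d : ℕ} [F : MeasurableSpace Ω]
    (μ : Measure Ω) [IsProbabilityMeasure μ] [μ.IsComplete]
    (H : MeasurableSpace Ω) (hHF : H ≤ F)
    (X : Ω → Set (Ed d)) (hX : GraphMeasurable F X)
    (hXp : ∀ᵐ ω ∂μ, IsClosed (X ω) ∧ Convex ℝ (X ω) ∧ (X ω).Nonempty)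
    (hXsel : ∃ ξ : Ω → Ed d, Measurable[H] ξ ∧ Integrable ξ μ ∧ ∀ᵐ ω ∂μ, ξ ω ∈ X ω)
    (C : Ω → Set (Ed d)) (hC : IsCore μ H X C)
    (M : Ω → Set (Ed d)) (hM : IsCondConvexHull μ H X M)
    -- Y is the conditional expectation E(X|H)
    (Y : Ω → Set (Ed d)) (hYgr : GraphMeasurable H Y)
    (hYcl : ∀ᵐ ω ∂μ, IsClosed (Y ω))
    (hY : ∀ η : Ω → Ed d,
      (Measurable[H] η ∧ Integrable η μ ∧ ∀ᵐ ω ∂μ, η ω ∈ Y ω) ↔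
        ∃ g ∈ cl1 μ (condexpSet μ H X), η =ᵐ[μ] g) :
    (∀ᵐ ω ∂μ, C ω ⊆ Y ω ∧ Y ω ⊆ M ω) ∧
    (∀ ξ : Ω → Ed d, Measurable[F] ξ → Integrable ξ μ → (∀ᵐ ω ∂μ, ξ ω ∈ X ω) →
      ∀ᵐ ω ∂μ, (μ[ξ|H]) ω ∈ M ω) := by
  obtain ⟨hconv, hcond⟩ := stmt_16_general H μ hHF hXsel hC.1 hC.2.1 hM.1 hM.2.1 hM.2.2.1 hYgr
    (condexpSet_eq_image μ H X ▸ hY)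
  exact ⟨hconv, fun ξ hξ hξ_int hξX => hcond ξ ⟨hξ, hξ_int, hξX⟩⟩
end
end

section
/- Let Ξ be a nonempty family of real-valued F-measurable random variables and H ⊆ F a sub-σ-algebra. Then there exists an H-measurable random variable ξ̂ with values in (−∞,+∞], unique up to a.s. equality, such that (i) ξ̂ ≥ ξ a.s. for all ξ ∈ Ξ, and (ii) every H-measurable random variable η with values in (−∞,+∞] satisfying η ≥ ξ a.s. for all ξ ∈ Ξ also satisfies η ≥ ξ̂ a.s. (ξ̂ is called the H-conditional essential supremum of Ξ). -/
open MeasureTheory Filter Set Topology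

noncomputable section

/-- `s` is the `H`-conditional essential supremum of the family `Ξ` of real random
variables: an `H`-measurable `(-∞,∞]`-valued random variable dominating every `ξ ∈ Ξ`
a.s. and a.s. dominated by every `H`-measurable `(-∞,∞]`-valued random variable that
dominates every `ξ ∈ Ξ` a.s. -/
def IsCondEssSup {Ω : Type*} {F : MeasurableSpace Ω} (μ : Measure Ω)
    (H : MeasurableSpace Ω) (Ξ : Set (Ω → ℝ)) (s : Ω → EReal) : Prop :=
  Measurable[H] s ∧ (∀ᵐ ω ∂μ, s ω ≠ ⊥) ∧
    (∀ ξ ∈ Ξ, ∀ᵐ ω ∂μ, (ξ ω : EReal) ≤ s ω) ∧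
    ∀ η : Ω → EReal, Measurable[H] η → (∀ᵐ ω ∂μ, η ω ≠ ⊥) →
      (∀ ξ ∈ Ξ, ∀ᵐ ω ∂μ, (ξ ω : EReal) ≤ η ω) → ∀ᵐ ω ∂μ, s ω ≤ η ω

/-!
The `H`-measurable functions dominating `Ξ` a.e. form a set closed under countable pointwise infima.
Compressing `EReal` into a bounded interval by a strictly increasing map `φ`, the functional
`f ↦ ∫ φ ∘ f` is monotone, so it attains its minimum on that set at the infimum `s` of a minimizing
sequence. For any other member `f`, the infimum `s ⊓ f` is a member with `∫ φ ∘ s ≤ ∫ φ ∘ (s ⊓ f)`,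
which forces `s = s ⊓ f`, that is `s ≤ f`, a.e.
-/

open scoped ENNReal NNReal

theorem exists_isMinOn_of_sInf_mem {X β : Type*} [CompleteSemilatticeInf X]
    [CompleteLinearOrder β] [TopologicalSpace β] [OrderTopology β] [FirstCountableTopology β]
    {S : Set X} (hS : ∀ T ⊆ S, T.Countable → sInf T ∈ S) {I : X → β} (hI : Monotone I) :
    ∃ s ∈ S, IsMinOn I S s := by
  have hne : S.Nonempty := ⟨sInf ∅, hS ∅ (empty_subset S) countable_empty⟩
  obtain ⟨u, -, hu, huS⟩ := exists_seq_tendsto_sInf (hne.image I) (OrderBot.bddBelow _)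
  choose f hfS hf using huS
  have hI_le : I (sInf (range f)) ≤ sInf (I '' S) :=
    ge_of_tendsto' hu fun n => (hI (sInf_le (mem_range_self n))).trans_eq (hf n)
  exact ⟨sInf (range f), hS _ (range_subset_iff.2 hfS) (countable_range f),
    fun g hg => hI_le.trans (sInf_le (mem_image_of_mem I hg))⟩

section AELeast

variable {Ω α : Type*} {mΩ : MeasurableSpace Ω} {mα : MeasurableSpace α} {μ : Measure Ω}
  {φ : α → ℝ≥0∞}

theorem ae_le_of_lintegral_comp_le_lintegral_comp_inf [SemilatticeInf α]
    (hφ : StrictMono φ) (hφm : Measurable φ) {f g : Ω → α} (hf : AEMeasurable f μ)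
    (hfin : ∫⁻ ω, φ ((f ⊓ g) ω) ∂μ ≠ ∞)
    (hle : ∫⁻ ω, φ (f ω) ∂μ ≤ ∫⁻ ω, φ ((f ⊓ g) ω) ∂μ) : f ≤ᵐ[μ] g := by
  have hmono : (fun ω => φ ((f ⊓ g) ω)) ≤ᵐ[μ] fun ω => φ (f ω) :=
    .of_forall fun ω => hφ.monotone inf_le_left
  filter_upwards [ae_eq_of_ae_le_of_lintegral_le hmono hfin (hφm.comp_aemeasurable hf) hle]
    with ω hω
  by_contra hfg
  exact (hφ (inf_lt_left.2 hfg)).ne hω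

theorem exists_ae_least_of_sInf_mem_of_bounded [CompleteLattice α] [IsFiniteMeasure μ]
    (hφ : StrictMono φ) (hφm : Measurable φ) (hφb : ∃ c : ℝ≥0, ∀ x, φ x ≤ c)
    {S : Set (Ω → α)} (hSm : ∀ f ∈ S, AEMeasurable f μ)
    (hS : ∀ T ⊆ S, T.Countable → sInf T ∈ S) :
    ∃ s ∈ S, ∀ f ∈ S, s ≤ᵐ[μ] f := by
  have hmono : Monotone fun f : Ω → α => ∫⁻ ω, φ (f ω) ∂μ :=
    fun f g hfg => lintegral_mono fun ω => hφ.monotone (hfg ω)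
  obtain ⟨s, hs, hmin⟩ := exists_isMinOn_of_sInf_mem hS hmono
  refine ⟨s, hs, fun f hf => ?_⟩
  have hsf : s ⊓ f ∈ S := by
    simpa only [sInf_pair] using
      hS {s, f} (pair_subset hs hf) (countable_singleton f |>.insert s)
  have hfin : ∫⁻ ω, φ ((s ⊓ f) ω) ∂μ < ∞ :=
    IsFiniteMeasure.lintegral_lt_top_of_bounded_to_ennreal μ (hφb.imp fun _ hc ω => hc _)
  exact ae_le_of_lintegral_comp_le_lintegral_comp_inf hφ hφm (hSm s hs) hfin.ne (hmin hsf)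

theorem exists_ae_least_of_sInf_mem [CompleteLattice α] [SFinite μ]
    (hφ : StrictMono φ) (hφm : Measurable φ) {S : Set (Ω → α)}
    (hSm : ∀ f ∈ S, AEMeasurable f μ) (hS : ∀ T ⊆ S, T.Countable → sInf T ∈ S) :
    ∃ s ∈ S, ∀ f ∈ S, s ≤ᵐ[μ] f := by
  let ψ := ENNReal.orderIsoIicOneBirational
  obtain ⟨s, hs, hleast⟩ := exists_ae_least_of_sInf_mem_of_bounded (μ := μ.toFinite)
    (φ := fun x => ψ (φ x)) (Subtype.strictMono_coe _ |>.comp (ψ.strictMono.comp hφ))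
    (measurable_subtype_coe.comp (ψ.continuous.measurable.comp hφm))
    ⟨1, fun x => by exact_mod_cast (ψ (φ x)).2⟩
    (fun f hf => (hSm f hf).mono_ac (toFinite_absolutelyContinuous μ)) hS
  exact ⟨s, hs, fun f hf => (absolutelyContinuous_toFinite μ).ae_le (hleast f hf)⟩

end AELeast

section MeasurableAEUpperBounds

variable {Ω α ι : Type*} {F : MeasurableSpace Ω} [MeasurableSpace α]

/-- The `H`-measurable functions dominating every member of the family `ξ` almost everywhere. The
exceptional null set may depend on the index, which matters for uncountable families. -/
def measurableAEUpperBounds [LE α] (μ : Measure Ω) (H : MeasurableSpace Ω)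
    (ξ : ι → Ω → α) : Set (Ω → α) :=
  {η | Measurable[H] η ∧ ∀ i, ξ i ≤ᵐ[μ] η}

theorem sInf_mem_measurableAEUpperBounds [CompleteLinearOrder α] [TopologicalSpace α]
    [OrderTopology α] [SecondCountableTopology α] [BorelSpace α] {μ : Measure Ω}
    {H : MeasurableSpace Ω} {ξ : ι → Ω → α} {T : Set (Ω → α)}
    (hT : T ⊆ measurableAEUpperBounds μ H ξ) (hTc : T.Countable) :
    sInf T ∈ measurableAEUpperBounds μ H ξ := by
  have : Countable T := hTc.to_subtype
  have hsInf : sInf T = fun ω => ⨅ f : T, f.1 ω := funext fun ω => sInf_apply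
  rw [hsInf]
  refine ⟨Measurable.iInf fun f => (hT f.2).1, fun i => ?_⟩
  filter_upwards [ae_all_iff.2 fun f : T => (hT f.2).2 i] with ω hω
  exact le_iInf hω

end MeasurableAEUpperBounds

section CondEssSup

variable {Ω : Type*} {F : MeasurableSpace Ω} {μ : Measure Ω} {H : MeasurableSpace Ω}
  {Ξ : Set (Ω → ℝ)}

theorem isCondEssSup_of_ae_least (hne : Ξ.Nonempty) {s : Ω → EReal}
    (hs : s ∈ measurableAEUpperBounds μ H fun (ξ : Ξ) ω => (ξ.1 ω : EReal))
    (hleast : ∀ η ∈ measurableAEUpperBounds μ H fun (ξ : Ξ) ω => (ξ.1 ω : EReal), s ≤ᵐ[μ] η) :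
    IsCondEssSup μ H Ξ s := by
  obtain ⟨hsm, hdom⟩ := hs
  have hbot : ∀ᵐ ω ∂μ, s ω ≠ ⊥ := by
    obtain ⟨ξ, hξ⟩ := hne
    filter_upwards [hdom ⟨ξ, hξ⟩] with ω hω
    exact ((EReal.bot_lt_coe _).trans_le hω).ne'
  exact ⟨hsm, hbot, fun ξ hξ => hdom ⟨ξ, hξ⟩,
    fun η hη _ hηdom => hleast η ⟨hη, fun ξ => hηdom ξ ξ.2⟩⟩

theorem IsCondEssSup.ae_le {s s' : Ω → EReal} (hs : IsCondEssSup μ H Ξ s)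
    (hs' : IsCondEssSup μ H Ξ s') : s ≤ᵐ[μ] s' :=
  hs.2.2.2 s' hs'.1 hs'.2.1 hs'.2.2.1

theorem IsCondEssSup.ae_eq {s s' : Ω → EReal} (hs : IsCondEssSup μ H Ξ s)
    (hs' : IsCondEssSup μ H Ξ s') : s =ᵐ[μ] s' :=
  (hs.ae_le hs').antisymm (hs'.ae_le hs)

theorem stmt_18_general [SFinite μ] (hHF : H ≤ F) (hne : Ξ.Nonempty) :
    ∃ s : Ω → EReal, IsCondEssSup μ H Ξ s ∧
      ∀ s' : Ω → EReal, IsCondEssSup μ H Ξ s' → s' =ᵐ[μ] s := by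
  obtain ⟨s, hs, hleast⟩ := exists_ae_least_of_sInf_mem (μ := μ)
    (S := measurableAEUpperBounds μ H fun (ξ : Ξ) ω => (ξ.1 ω : EReal))
    EReal.exp_strictMono EReal.measurable_exp (fun η hη => (hη.1.mono hHF le_rfl).aemeasurable)
    fun T => sInf_mem_measurableAEUpperBounds
  have hsup : IsCondEssSup μ H Ξ s := isCondEssSup_of_ae_least hne hs hleast
  exact ⟨s, hsup, fun s' hs' => hs'.ae_eq hsup⟩

end CondEssSup

/-- Theorem: for every nonempty family `Ξ` of real-valued random variables there exists an
`H`-conditional essential supremum, unique up to a.s. equality. -/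
theorem stmt_18 {Ω : Type*} [F : MeasurableSpace Ω]
    (μ : Measure Ω) [IsProbabilityMeasure μ]
    (H : MeasurableSpace Ω) (hHF : H ≤ F)
    (Ξ : Set (Ω → ℝ)) (hne : Ξ.Nonempty) (hmeas : ∀ ξ ∈ Ξ, Measurable[F] ξ) :
    ∃ s : Ω → EReal, IsCondEssSup μ H Ξ s ∧
      ∀ s' : Ω → EReal, IsCondEssSup μ H Ξ s' → s' =ᵐ[μ] s :=
  stmt_18_general hHF hne
end
end
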